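/- Let Λ be an artin algebra. The assignment X ↦ X ∩ X^⊥ gives a bijection between contravariantly finite resolving subcategories X of the class P of finitely generated modules of finite projective dimension and equivalence classes of finitely generated tilting Λ-modules, where two tilting modules T, T' are equivalent if add T = add T'. -/

import Mathlib

open CategoryTheory

universe u

/-- The `n`-th Ext group of `A`-modules `M`, `N`. -/
noncomputable abbrev ext {A : Type u} [Ring A] (M N : ModuleCat.{u} A) (n : ℕ) : Type u :=
  ((Ext ℤ (ModuleCat.{u} A) n).obj (Opposite.op M)).obj N

/-- `Ext^i(N, M) = 0` for all `i > 0`. -/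
def ExtVanish {A : Type u} [Ring A] (N M : ModuleCat.{u} A) : Prop :=
  ∀ i, 0 < i → Subsingleton (ext N M i)

/-- `M` has projective dimension at most `n`, i.e. `Ext^i(M, -) = 0` for `i > n`. -/
def pdLE {A : Type u} [Ring A] (M : ModuleCat.{u} A) (n : ℕ) : Prop :=
  ∀ i, n < i → ∀ N : ModuleCat.{u} A, Subsingleton (ext M N i)

/-- The projective dimension of `M`, as an element of `ℕ∞` (`⊤` if infinite). -/
noncomputable def projDim {A : Type u} [Ring A] (M : ModuleCat.{u} A) : ℕ∞ :=
  sInf {d : ℕ∞ | ∃ n : ℕ, d = n ∧ pdLE M n}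

/-- Membership in `𝒫`: finitely generated of finite projective dimension. -/
def InP {A : Type u} [Ring A] (M : ModuleCat.{u} A) : Prop :=
  Module.Finite A M ∧ ∃ n, pdLE M n

/-- The finitistic dimension of `A`. -/
noncomputable def findim (A : Type u) [Ring A] : ℕ∞ :=
  sSup {d : ℕ∞ | ∃ M : ModuleCat.{u} A, InP M ∧ d = projDim M}

/-- `M` is a direct summand of `S`. -/
def IsSummand {A : Type u} [Ring A] (M S : ModuleCat.{u} A) : Prop :=
  ∃ (s : M →ₗ[A] S) (r : S →ₗ[A] M), r ∘ₗ s = LinearMap.id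

/-- `M` belongs to `add 𝒳`: `M` is a direct summand of a finite direct sum of objects of `𝒳`. -/
def InAddOf {A : Type u} [Ring A] (X : ModuleCat.{u} A → Prop) (M : ModuleCat.{u} A) : Prop :=
  ∃ (k : ℕ) (F : Fin k → ModuleCat.{u} A), (∀ i, X (F i)) ∧
    IsSummand M (ModuleCat.of A (DirectSum (Fin k) (fun i => ↥(F i))))

/-- `M` belongs to `Add T`: `M` is a direct summand of an arbitrary direct sum of copies of `T`. -/
def InAdd {A : Type u} [Ring A] (T M : ModuleCat.{u} A) : Prop :=
  ∃ ι : Type u, IsSummand M (ModuleCat.of A (DirectSum ι (fun _ => ↥T)))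

/-- `M ∈ 𝒳^⊥`: `Ext^i(N, M) = 0` for all `N ∈ 𝒳` and `i > 0`. -/
def InPerpOf {A : Type u} [Ring A] (X : ModuleCat.{u} A → Prop) (M : ModuleCat.{u} A) : Prop :=
  ∀ N, X N → ExtVanish N M

/-- `M` is Ext-injective in `𝒫`: `M ∈ 𝒫` and `Ext^1(N, M) = 0` for all `N ∈ 𝒫`. -/
def ExtInjInP {A : Type u} [Ring A] (M : ModuleCat.{u} A) : Prop :=
  InP M ∧ ∀ N : ModuleCat.{u} A, InP N → Subsingleton (ext N M 1)

/-- `M` is splitting injective in `𝒳`: every injective map `M → Y` with `Y ∈ add 𝒳` splits. -/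
def SplittingInjIn {A : Type u} [Ring A] (X : ModuleCat.{u} A → Prop)
    (M : ModuleCat.{u} A) : Prop :=
  ∀ Y : ModuleCat.{u} A, InAddOf X Y → ∀ f : M →ₗ[A] Y, Function.Injective f →
    ∃ r : Y →ₗ[A] M, r ∘ₗ f = LinearMap.id

/-- `0 → M₁ → M₂ → M₃ → 0` is a short exact sequence. -/
def ShortExact {A : Type u} [Ring A] {M₁ M₂ M₃ : ModuleCat.{u} A}
    (f : M₁ →ₗ[A] M₂) (g : M₂ →ₗ[A] M₃) : Prop :=
  Function.Injective f ∧ Function.Exact f g ∧ Function.Surjective g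

/-- `f : XM → M` is a right `𝒳`-approximation of `M`. -/
def IsRightApprox {A : Type u} [Ring A] (X : ModuleCat.{u} A → Prop)
    {XM M : ModuleCat.{u} A} (f : XM →ₗ[A] M) : Prop :=
  X XM ∧ ∀ Y : ModuleCat.{u} A, X Y → ∀ g : Y →ₗ[A] M, ∃ h : Y →ₗ[A] XM, f ∘ₗ h = g

/-- `f : XM → M` is a minimal right `𝒳`-approximation. -/
def IsMinimalRightApprox {A : Type u} [Ring A] (X : ModuleCat.{u} A → Prop)
    {XM M : ModuleCat.{u} A} (f : XM →ₗ[A] M) : Prop :=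
  IsRightApprox X f ∧ ∀ g : XM →ₗ[A] XM, f ∘ₗ g = f → Function.Bijective g

/-- `𝒳` is contravariantly finite in `mod A`. -/
def ContravariantlyFinite {A : Type u} [Ring A] (X : ModuleCat.{u} A → Prop) : Prop :=
  ∀ M : ModuleCat.{u} A, Module.Finite A M →
    ∃ (XM : ModuleCat.{u} A) (f : XM →ₗ[A] M), IsRightApprox X f

/-- `M` is an indecomposable module: nonzero, and its only idempotent endomorphisms
are `0` and the identity. -/
def Indec {A : Type u} [Ring A] (M : ModuleCat.{u} A) : Prop :=
  (¬ Subsingleton M) ∧ ∀ e : M →ₗ[A] M, e ∘ₗ e = e → e = 0 ∨ e = LinearMap.id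

/-- `L` admits a finite coresolution `0 → L → C^0 → ⋯ → C^n → 0` with all `C^i ∈ add T`. -/
def HasAddCoresolution {A : Type u} [Ring A] (T L : ModuleCat.{u} A) : Prop :=
  ∃ (C : ℕ → ModuleCat.{u} A) (d : ∀ i, C i →ₗ[A] C (i+1)) (f : L →ₗ[A] C 0),
    Function.Injective f ∧ Function.Exact f (d 0) ∧
    (∀ i, Function.Exact (d i) (d (i+1))) ∧
    (∀ i, InAddOf (fun X => X = T) (C i)) ∧
    (∃ m, ∀ i, m ≤ i → Subsingleton (C i))

/-- `T` is a tilting `A`-module. -/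
def IsTilting {A : Type u} [Ring A] (T : ModuleCat.{u} A) : Prop :=
  Module.Finite A T ∧ (∃ n, pdLE T n) ∧ ExtVanish T T ∧
    HasAddCoresolution T (ModuleCat.of A A)

/-- `𝒳` is a resolving subcategory of `mod A`. -/
def Resolving {A : Type u} [Ring A] (X : ModuleCat.{u} A → Prop) : Prop :=
  (∀ M : ModuleCat.{u} A, Module.Finite A M → Module.Projective A M → X M) ∧
  (∀ (M₁ M₂ M₃ : ModuleCat.{u} A) (f : M₁ →ₗ[A] M₂) (g : M₂ →ₗ[A] M₃),
      ShortExact f g → X M₁ → X M₃ → X M₂) ∧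
  (∀ (M₁ M₂ M₃ : ModuleCat.{u} A) (f : M₁ →ₗ[A] M₂) (g : M₂ →ₗ[A] M₃),
      ShortExact f g → X M₂ → X M₃ → X M₁)

/-- `F` is a complete irredundant family of representatives of the isomorphism classes of
indecomposable Ext-injective modules in `𝒫`. -/
def IsCompleteExtInjFamily {A : Type u} [Ring A] {ι : Type u}
    (F : ι → ModuleCat.{u} A) : Prop :=
  (∀ i, Indec (F i) ∧ ExtInjInP (F i)) ∧
  (∀ M : ModuleCat.{u} A, Indec M → ExtInjInP M → ∃ i, Nonempty (M ≃ₗ[A] F i)) ∧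
  (∀ i j, Nonempty (F i ≃ₗ[A] F j) → i = j)

/-- `I` is a complete set of pairwise non-isomorphic indecomposable injective modules. -/
def IsCompleteIndecInjFamily {A : Type u} [Ring A] {n : ℕ}
    (I : Fin n → ModuleCat.{u} A) : Prop :=
  (∀ j, Module.Finite A (I j) ∧ Module.Injective A (I j) ∧ Indec (I j)) ∧
  (∀ M : ModuleCat.{u} A, Module.Finite A M → Module.Injective A M → Indec M →
      ∃ j, Nonempty (M ≃ₗ[A] I j)) ∧
  (∀ j k, Nonempty (I j ≃ₗ[A] I k) → j = k)

/-!
Contravariantly finite resolving to tilting: let `0 → Y → C → M → 0` be given by a minimal right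
`X`-approximation `C → M`. By Wakamatsu's lemma `Y ∈ X^⊥`. Filtering a module by simple modules,
every `M ∈ X` is a summand of an iterated extension of approximations of simple modules, so the
projective dimensions in `X` are bounded. Pulling back the approximation of `I/M`, for `I` an
injective module containing `M`, gives `0 → M → E → C → 0` with `E ∈ X^⊥` and `C ∈ X` (Salce's
trick). Iterating it, the bound on projective dimensions makes the process stop, and every `M ∈ X`
has a finite coresolution by `X ∩ X^⊥`. For `M = A` this yields the tilting module; for all `M` it
shows that `X` is recovered from `X ∩ X^⊥`.

Tilting to contravariantly finite resolving: take `X = {M ∈ 𝒫 | Ext^i(M, T) = 0 for i > 0}`. The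
coresolution of `A` shows that finitely generated modules in `T^⊥` are quotients of modules in
`add T`, with kernel again in `T^⊥`, and Salce's trick extends the resulting approximations to all
finitely generated modules by induction on the degrees in which `Ext(T, -)` is nonzero.
-/

/-- `Ext^i(M, N) = 0` for all `i > m`. The case `m = 0` is `ExtVanish`. -/
def ExtVanishAbove {A : Type u} [Ring A] (m : ℕ) (M N : ModuleCat.{u} A) : Prop :=
  ∀ i, m < i → Subsingleton (ext M N i)

section Ext

variable {A : Type u} [Ring A] {M M₁ M₂ M₃ N S : ModuleCat.{u} A}
  {f : M₁ →ₗ[A] M₂} {g : M₂ →ₗ[A] M₃} {i m n : ℕ}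

theorem subsingleton_ext_iff (hi : 0 < i) :
    Subsingleton (ext M N i) ↔ Subsingleton (Abelian.Ext.{u} M N i) := by
  obtain ⟨n, rfl⟩ := Nat.exists_eq_add_one_of_ne_zero hi.ne'
  let P := ProjectiveResolution.of M
  trans ∀ f : P.complex.X (n + 1) ⟶ N, P.complex.d (n + 1 + 1) (n + 1) ≫ f = 0 →
      ∃ g : P.complex.X n ⟶ N, P.complex.d (n + 1) n ≫ g = f
  · rw [← ModuleCat.isZero_iff_subsingleton, (P.isoExt (R := ℤ) (n + 1) N).isZero_iff,
      ← HomologicalComplex.exactAt_iff_isZero_homology,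
      HomologicalComplex.exactAt_iff' _ n (n + 1) (n + 1 + 1) (by simp) (by simp),
      ShortComplex.moduleCat_exact_iff]
    rfl
  · rw [subsingleton_iff_forall_eq 0]
    constructor
    · intro h y
      obtain ⟨f, hf, rfl⟩ := P.extMk_surjective y (n + 1 + 1) rfl
      exact (P.extMk_eq_zero_iff f _ rfl hf n rfl).2 (h f hf)
    · intro h f hf
      exact (P.extMk_eq_zero_iff f _ rfl hf n rfl).1 (h _)

theorem subsingleton_ext_of_projective (hM : Module.Projective A M) (hi : 0 < i) :
    Subsingleton (ext M N i) := by
  have : Projective M := (IsProjective.iff_projective (R := A) (P := M)).1 hM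
  obtain ⟨n, rfl⟩ := Nat.exists_eq_add_one_of_ne_zero hi.ne'
  exact (subsingleton_ext_iff hi).2 (Abelian.Ext.subsingleton_of_projective _ _ _)

theorem subsingleton_ext_of_injective (hN : Module.Injective A N) (hi : 0 < i) :
    Subsingleton (ext M N i) := by
  have : Injective N := Module.injective_object_of_injective_module A N
  obtain ⟨n, rfl⟩ := Nat.exists_eq_add_one_of_ne_zero hi.ne'
  exact (subsingleton_ext_iff hi).2 (Abelian.Ext.subsingleton_of_injective _ _ _)

theorem IsSummand.subsingleton_ext_left (h : IsSummand M S) (hi : 0 < i)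
    (hS : Subsingleton (ext S N i)) : Subsingleton (ext M N i) := by
  rw [subsingleton_ext_iff hi] at *
  obtain ⟨s, r, hrs⟩ := h
  have hid : ModuleCat.ofHom s ≫ ModuleCat.ofHom r = 𝟙 M := by
    ext x; exact LinearMap.congr_fun hrs x
  refine subsingleton_of_forall_eq 0 fun y ↦ ?_
  rw [← Abelian.Ext.mk₀_id_comp y, ← hid, ← Abelian.Ext.mk₀_comp_mk₀,
    Abelian.Ext.comp_assoc_of_second_deg_zero,
    Subsingleton.elim ((Abelian.Ext.mk₀ (ModuleCat.ofHom r)).comp y _) 0, Abelian.Ext.comp_zero]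

theorem IsSummand.subsingleton_ext_right (h : IsSummand N S) (hi : 0 < i)
    (hS : Subsingleton (ext M S i)) : Subsingleton (ext M N i) := by
  rw [subsingleton_ext_iff hi] at *
  obtain ⟨s, r, hrs⟩ := h
  have hid : ModuleCat.ofHom s ≫ ModuleCat.ofHom r = 𝟙 N := by
    ext x; exact LinearMap.congr_fun hrs x
  refine subsingleton_of_forall_eq 0 fun y ↦ ?_
  rw [← Abelian.Ext.comp_mk₀_id y, ← hid, ← Abelian.Ext.mk₀_comp_mk₀,
    ← Abelian.Ext.comp_assoc_of_second_deg_zero,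
    Subsingleton.elim (y.comp (Abelian.Ext.mk₀ (ModuleCat.ofHom s)) _) 0, Abelian.Ext.zero_comp]

namespace ShortExact

theorem toShortComplex (h : ShortExact f g) :
    (ShortComplex.mk (ModuleCat.ofHom f) (ModuleCat.ofHom g)
      (by ext x; exact h.2.1.apply_apply_eq_zero x)).ShortExact where
  exact := (ShortComplex.ShortExact.moduleCat_exact_iff_function_exact _).2 h.2.1
  mono_f := (ModuleCat.mono_iff_injective _).2 h.1
  epi_g := (ModuleCat.epi_iff_surjective _).2 h.2.2

theorem subsingleton_ext_cov₁ (h : ShortExact f g) (hi : 0 < i)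
    (h₃ : Subsingleton (ext M M₃ i)) (h₂ : Subsingleton (ext M M₂ (i + 1))) :
    Subsingleton (ext M M₁ (i + 1)) := by
  rw [subsingleton_ext_iff (by lia)] at *
  refine subsingleton_of_forall_eq 0 fun y ↦ ?_
  obtain ⟨x, rfl⟩ := Abelian.Ext.covariant_sequence_exact₁ M h.toShortComplex y
    (Subsingleton.elim _ _) rfl
  rw [Subsingleton.elim x 0, Abelian.Ext.zero_comp]

theorem subsingleton_ext_cov₂ (h : ShortExact f g) (hi : 0 < i)
    (h₁ : Subsingleton (ext M M₁ i)) (h₃ : Subsingleton (ext M M₃ i)) :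
    Subsingleton (ext M M₂ i) := by
  rw [subsingleton_ext_iff hi] at *
  refine subsingleton_of_forall_eq 0 fun y ↦ ?_
  obtain ⟨x, rfl⟩ := Abelian.Ext.covariant_sequence_exact₂ M h.toShortComplex y
    (Subsingleton.elim _ _)
  rw [Subsingleton.elim x 0, Abelian.Ext.zero_comp]

theorem subsingleton_ext_cov₃ (h : ShortExact f g) (hi : 0 < i)
    (h₂ : Subsingleton (ext M M₂ i)) (h₁ : Subsingleton (ext M M₁ (i + 1))) :
    Subsingleton (ext M M₃ i) := by
  rw [subsingleton_ext_iff (by lia)] at *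
  refine subsingleton_of_forall_eq 0 fun y ↦ ?_
  obtain ⟨x, rfl⟩ := Abelian.Ext.covariant_sequence_exact₃ M h.toShortComplex y rfl
    (Subsingleton.elim _ _)
  rw [Subsingleton.elim x 0, Abelian.Ext.zero_comp]

theorem subsingleton_ext_contra₁ (h : ShortExact f g) (hi : 0 < i)
    (h₂ : Subsingleton (ext M₂ N i)) (h₃ : Subsingleton (ext M₃ N (i + 1))) :
    Subsingleton (ext M₁ N i) := by
  rw [subsingleton_ext_iff (by lia)] at *
  refine subsingleton_of_forall_eq 0 fun y ↦ ?_
  obtain ⟨x, rfl⟩ := Abelian.Ext.contravariant_sequence_exact₁ h.toShortComplex N y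
    (add_comm 1 i) (Subsingleton.elim _ _)
  rw [Subsingleton.elim x 0, Abelian.Ext.comp_zero]

theorem subsingleton_ext_contra₂ (h : ShortExact f g) (hi : 0 < i)
    (h₁ : Subsingleton (ext M₁ N i)) (h₃ : Subsingleton (ext M₃ N i)) :
    Subsingleton (ext M₂ N i) := by
  rw [subsingleton_ext_iff hi] at *
  refine subsingleton_of_forall_eq 0 fun y ↦ ?_
  obtain ⟨x, rfl⟩ := Abelian.Ext.contravariant_sequence_exact₂ h.toShortComplex N y
    (Subsingleton.elim _ _)
  rw [Subsingleton.elim x 0, Abelian.Ext.comp_zero]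

theorem subsingleton_ext_contra₃ (h : ShortExact f g) (hi : 0 < i)
    (h₁ : Subsingleton (ext M₁ N i)) (h₂ : Subsingleton (ext M₂ N (i + 1))) :
    Subsingleton (ext M₃ N (i + 1)) := by
  rw [subsingleton_ext_iff (by lia)] at *
  refine subsingleton_of_forall_eq 0 fun y ↦ ?_
  obtain ⟨x, rfl⟩ := Abelian.Ext.contravariant_sequence_exact₃ h.toShortComplex N y
    (Subsingleton.elim _ _) (add_comm 1 i)
  rw [Subsingleton.elim x 0, Abelian.Ext.comp_zero]

theorem exists_lift (h : ShortExact f g) (h₁ : Subsingleton (ext M M₁ 1))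
    (φ : M →ₗ[A] M₃) : ∃ ψ : M →ₗ[A] M₂, g ∘ₗ ψ = φ := by
  rw [subsingleton_ext_iff one_pos] at h₁
  obtain ⟨x, hx⟩ := Abelian.Ext.covariant_sequence_exact₃ M h.toShortComplex
    (Abelian.Ext.mk₀ (ModuleCat.ofHom φ)) (zero_add 1) (Subsingleton.elim _ _)
  obtain ⟨ψ, rfl⟩ := (Abelian.Ext.mk₀_bijective _ _).2 x
  rw [Abelian.Ext.mk₀_comp_mk₀] at hx
  exact ⟨ψ.hom, congrArg ModuleCat.Hom.hom ((Abelian.Ext.mk₀_bijective _ _).1 hx)⟩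

theorem exists_extend (h : ShortExact f g) (h₃ : Subsingleton (ext M₃ N 1))
    (φ : M₁ →ₗ[A] N) : ∃ ψ : M₂ →ₗ[A] N, ψ ∘ₗ f = φ := by
  rw [subsingleton_ext_iff one_pos] at h₃
  obtain ⟨x, hx⟩ := Abelian.Ext.contravariant_sequence_exact₁ h.toShortComplex N
    (Abelian.Ext.mk₀ (ModuleCat.ofHom φ)) (add_zero 1) (Subsingleton.elim _ _)
  obtain ⟨ψ, rfl⟩ := (Abelian.Ext.mk₀_bijective _ _).2 x
  rw [Abelian.Ext.mk₀_comp_mk₀] at hx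
  exact ⟨ψ.hom, congrArg ModuleCat.Hom.hom ((Abelian.Ext.mk₀_bijective _ _).1 hx)⟩

theorem subsingleton_ext_one_of_lift (h : ShortExact f g)
    (hlift : ∀ φ : M →ₗ[A] M₃, ∃ ψ : M →ₗ[A] M₂, g ∘ₗ ψ = φ)
    (h₂ : Subsingleton (ext M M₂ 1)) : Subsingleton (ext M M₁ 1) := by
  rw [subsingleton_ext_iff one_pos] at *
  refine subsingleton_of_forall_eq 0 fun y ↦ ?_
  obtain ⟨x, rfl⟩ := Abelian.Ext.covariant_sequence_exact₁ M h.toShortComplex y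
    (Subsingleton.elim _ _) rfl
  obtain ⟨φ, rfl⟩ := (Abelian.Ext.mk₀_bijective _ _).2 x
  obtain ⟨ψ, hψ⟩ := hlift φ.hom
  have hφ : φ = ModuleCat.ofHom ψ ≫ ModuleCat.ofHom g := by
    ext x; exact (LinearMap.congr_fun hψ x).symm
  have hzero := h.toShortComplex.comp_extClass
  dsimp only at hzero ⊢
  rw [hφ, ← Abelian.Ext.mk₀_comp_mk₀, Abelian.Ext.comp_assoc_of_second_deg_zero, hzero,
    Abelian.Ext.comp_zero]

theorem subsingleton_ext_one_of_extend (h : ShortExact f g)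
    (hextend : ∀ φ : M₁ →ₗ[A] N, ∃ ψ : M₂ →ₗ[A] N, ψ ∘ₗ f = φ)
    (h₂ : Subsingleton (ext M₂ N 1)) : Subsingleton (ext M₃ N 1) := by
  rw [subsingleton_ext_iff one_pos] at *
  refine subsingleton_of_forall_eq 0 fun y ↦ ?_
  obtain ⟨x, rfl⟩ := Abelian.Ext.contravariant_sequence_exact₃ h.toShortComplex N y
    (Subsingleton.elim _ _) (add_comm 1 0)
  obtain ⟨φ, rfl⟩ := (Abelian.Ext.mk₀_bijective _ _).2 x
  obtain ⟨ψ, hψ⟩ := hextend φ.hom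
  have hφ : φ = ModuleCat.ofHom f ≫ ModuleCat.ofHom ψ := by
    ext x; exact (LinearMap.congr_fun hψ x).symm
  have hzero := h.toShortComplex.extClass_comp
  dsimp only at hzero ⊢
  rw [hφ, ← Abelian.Ext.mk₀_comp_mk₀, ← Abelian.Ext.comp_assoc_of_second_deg_zero, hzero,
    Abelian.Ext.zero_comp]

theorem extVanishAbove_cov₁ (h : ShortExact f g) (h₃ : ExtVanishAbove m M M₃)
    (h₂ : ExtVanishAbove (m + 1) M M₂) : ExtVanishAbove (m + 1) M M₁
  | i + 1, hi => h.subsingleton_ext_cov₁ (by lia) (h₃ i (by lia)) (h₂ (i + 1) hi)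

theorem extVanishAbove_cov₂ (h : ShortExact f g) (h₁ : ExtVanishAbove m M M₁)
    (h₃ : ExtVanishAbove m M M₃) : ExtVanishAbove m M M₂ :=
  fun i hi ↦ h.subsingleton_ext_cov₂ (by lia) (h₁ i hi) (h₃ i hi)

theorem extVanishAbove_cov₃ (h : ShortExact f g) (h₂ : ExtVanishAbove m M M₂)
    (h₁ : ExtVanishAbove (m + 1) M M₁) : ExtVanishAbove m M M₃ :=
  fun i hi ↦ h.subsingleton_ext_cov₃ (by lia) (h₂ i hi) (h₁ (i + 1) (by lia))

theorem extVanishAbove_contra₁ (h : ShortExact f g) (h₂ : ExtVanishAbove m M₂ N)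
    (h₃ : ExtVanishAbove (m + 1) M₃ N) : ExtVanishAbove m M₁ N :=
  fun i hi ↦ h.subsingleton_ext_contra₁ (by lia) (h₂ i hi) (h₃ (i + 1) (by lia))

theorem extVanishAbove_contra₂ (h : ShortExact f g) (h₁ : ExtVanishAbove m M₁ N)
    (h₃ : ExtVanishAbove m M₃ N) : ExtVanishAbove m M₂ N :=
  fun i hi ↦ h.subsingleton_ext_contra₂ (by lia) (h₁ i hi) (h₃ i hi)

end ShortExact

theorem ExtVanishAbove.mono (h : ExtVanishAbove m M N) (hmn : m ≤ n) : ExtVanishAbove n M N :=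
  fun i hi ↦ h i (hmn.trans_lt hi)

theorem ExtVanish.above (h : ExtVanish M N) (m : ℕ) : ExtVanishAbove m M N :=
  ExtVanishAbove.mono h m.zero_le

theorem extVanish_of_projective (hM : Module.Projective A M) : ExtVanish M N :=
  fun _ hi ↦ subsingleton_ext_of_projective hM hi

theorem extVanish_of_injective (hN : Module.Injective A N) : ExtVanish M N :=
  fun _ hi ↦ subsingleton_ext_of_injective hN hi

theorem IsSummand.extVanish_right (h : IsSummand N S) (hS : ExtVanish M S) : ExtVanish M N :=
  fun i hi ↦ h.subsingleton_ext_right hi (hS i hi)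

theorem pdLE_iff : pdLE M n ↔ ∀ N, ExtVanishAbove n M N :=
  ⟨fun h N i hi ↦ h i hi N, fun h i hi N ↦ h N i hi⟩

theorem pdLE.mono (h : pdLE M m) (hmn : m ≤ n) : pdLE M n :=
  fun i hi ↦ h i (hmn.trans_lt hi)

end Ext

section EssentialExtensions

/-- In the lattice of submodules of a module, `b` is an essential extension of `a`: it contains `a`
and every nonzero element below `b` meets `a` nontrivially. -/
def IsEssentialIn {α : Type*} [Lattice α] [OrderBot α] (a b : α) : Prop :=
  a ≤ b ∧ ∀ c ≤ b, Disjoint c a → c = ⊥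

theorem IsEssentialIn.trans {α : Type*} [Lattice α] [OrderBot α] {a b c : α}
    (hab : IsEssentialIn a b) (hbc : IsEssentialIn b c) : IsEssentialIn a c :=
  ⟨hab.1.trans hbc.1, fun d hdc hda ↦ hbc.2 d hdc <| disjoint_iff.2 <|
    hab.2 _ inf_le_right (hda.mono_left inf_le_left)⟩

theorem exists_maximal_isEssentialIn {α : Type*} [CompleteLattice α] [IsCompactlyGenerated α]
    (a : α) : ∃ b, Maximal (IsEssentialIn a) b := by
  obtain ⟨b, -, hb⟩ := zorn_le_nonempty₀ {b | IsEssentialIn a b}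
    (fun s hs hchain y hy ↦ ⟨sSup s, ⟨(hs hy).1.trans (le_sSup hy), fun c hcs hca ↦ by
        rw [← inf_eq_left.2 hcs, hchain.directedOn.inf_sSup_eq]
        exact iSup₂_eq_bot.2 fun b hb ↦ (hs hb).2 _ inf_le_right (hca.mono_left inf_le_left)⟩,
      fun _ ↦ le_sSup⟩) a ⟨le_rfl, fun _ hca hd ↦ hd.eq_bot_of_le hca⟩
  exact ⟨b, hb⟩

theorem exists_maximal_disjoint {α : Type*} [CompleteLattice α] [IsCompactlyGenerated α]
    (a : α) : ∃ b, Maximal (Disjoint a) b := by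
  obtain ⟨b, -, hb⟩ := zorn_le_nonempty₀ {b | Disjoint a b}
    (fun s hs hchain _ _ ↦ ⟨sSup s, hchain.directedOn.disjoint_sSup_right.2 fun _ hb ↦ hs hb,
      fun _ ↦ le_sSup⟩) ⊥ disjoint_bot_right
  exact ⟨b, hb⟩

variable {A Q : Type u} [Ring A] [AddCommGroup Q] [Module A Q] {N E : Submodule A Q}

-- The extension of `E → Q` to `Q ⧸ C`, for `C` a maximal submodule disjoint from `E`, has an
-- image which is essential over `E`, hence equal to `E`.
theorem exists_retraction_of_maximal_isEssentialIn (hQ : Module.Injective A Q)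
    (hE : Maximal (IsEssentialIn N) E) : ∃ r : Q →ₗ[A] E, r ∘ₗ E.subtype = LinearMap.id := by
  obtain ⟨C, hEC, hC⟩ := exists_maximal_disjoint E
  have hinj : Function.Injective (C.mkQ ∘ₗ E.subtype) := by
    rw [← LinearMap.ker_eq_bot, LinearMap.ker_comp, C.ker_mkQ]
    exact Submodule.disjoint_iff_comap_eq_bot.1 hEC
  obtain ⟨h, hh⟩ := Module.Injective.extension_property A Q _ _ _ hinj E.subtype
  have hhE (x : E) : h (C.mkQ x) = x := LinearMap.congr_fun hh x
  have hessential : IsEssentialIn E (LinearMap.range h) := by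
    refine ⟨fun x hx ↦ ⟨_, hhE ⟨x, hx⟩⟩, fun L hL hLE ↦ ?_⟩
    have hCL : C ≤ L.comap (h ∘ₗ C.mkQ) := fun x hx ↦ by
      simp [(Submodule.Quotient.mk_eq_zero C).2 hx]
    have hdisj : Disjoint E (L.comap (h ∘ₗ C.mkQ)) :=
      Submodule.disjoint_def.2 fun x hxE hxL ↦ Submodule.disjoint_def.1 hLE x
        (by simpa only [Submodule.mem_comap, LinearMap.comp_apply, hhE ⟨x, hxE⟩] using hxL) hxE
    refine (Submodule.eq_bot_iff L).2 fun x hx ↦ ?_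
    obtain ⟨q, rfl⟩ := hL hx
    obtain ⟨q, rfl⟩ := C.mkQ_surjective q
    rw [C.mkQ_apply, (Submodule.Quotient.mk_eq_zero C).2 (hC hdisj hCL hx), map_zero]
  have hrange : LinearMap.range h ≤ E := hE.2 (hE.1.trans hessential) hessential.1
  exact ⟨(h ∘ₗ C.mkQ).codRestrict E fun _ ↦ hrange ⟨_, rfl⟩,
    LinearMap.ext fun x ↦ Subtype.ext (hhE x)⟩

theorem injective_of_retraction {P Q : Type u} [AddCommGroup P] [Module A P] [AddCommGroup Q]
    [Module A Q] (hQ : Module.Injective A Q) {s : P →ₗ[A] Q} {r : Q →ₗ[A] P}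
    (hrs : r ∘ₗ s = LinearMap.id) : Module.Injective A P where
  out X Y _ _ _ _ f hf g := by
    obtain ⟨k, hk⟩ := hQ.out f hf (s ∘ₗ g)
    exact ⟨r ∘ₗ k, fun x ↦ by simpa [hk] using LinearMap.congr_fun hrs (g x)⟩

theorem IsEssentialIn.mem_of_isSimpleModule (hNE : IsEssentialIn N E) {S : Type*} [AddCommGroup S]
    [Module A S] [IsSimpleModule A S] (φ : S →ₗ[A] E) (x : S) : (φ x : Q) ∈ N := by
  let ψ : S →ₗ[A] Q := E.subtype ∘ₗ φ
  suffices N.comap ψ = ⊤ from Submodule.eq_top_iff'.1 this x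
  by_contra hne
  have hbot : N.comap ψ = ⊥ := (eq_bot_or_eq_top _).resolve_right hne
  have hdisj : Disjoint (LinearMap.range ψ) N := by
    rw [disjoint_iff, ← Submodule.map_comap_eq, hbot, Submodule.map_bot]
  have hrange : LinearMap.range ψ = ⊥ :=
    hNE.2 _ (LinearMap.range_comp_le_range _ _ |>.trans E.range_subtype.le) hdisj
  exact hne (eq_top_iff.2 (LinearMap.range_le_iff_comap.1 (hrange.le.trans bot_le)).ge)

variable {R : Type*} [CommRing R] [Algebra R A] [Module R Q] [IsScalarTower R A Q]

theorem IsEssentialIn.isNoetherian_hom [IsNoetherian R N] (hNE : IsEssentialIn N E) {X : Type*}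
    [AddCommGroup X] [Module A X] (hX : IsFiniteLength A X) : IsNoetherian R (X →ₗ[A] E) := by
  induction hX with
  | of_subsingleton => infer_instance
  | @of_simple_quotient X _ _ K _ _ ih =>
    have := IsSimpleModule.nontrivial A (X ⧸ K)
    obtain ⟨x, hx⟩ := exists_ne (0 : X ⧸ K)
    have : IsNoetherian R (N.restrictScalars R) := ‹IsNoetherian R N›
    have : IsNoetherian R ((X ⧸ K) →ₗ[A] E) := by
      refine isNoetherian_of_injective ((E.subtype.restrictScalars R ∘ₗ
        LinearMap.applyₗ' R x).codRestrict (N.restrictScalars R)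
          fun φ ↦ hNE.mem_of_isSimpleModule φ x) fun φ ψ hφψ ↦ ?_
      have hval := congrArg Subtype.val hφψ
      exact LinearMap.ext_on (IsSimpleModule.span_singleton_eq_top A hx)
        (Set.eqOn_singleton.2 (Subtype.ext hval))
    refine isNoetherian_of_range_eq_ker (LinearMap.lcomp R E K.mkQ) (LinearMap.lcomp R E K.subtype)
      (le_antisymm ?_ fun φ hφ ↦ ⟨K.liftQ φ fun x hx ↦ LinearMap.congr_fun hφ ⟨x, hx⟩, rfl⟩)
    rintro _ ⟨φ, rfl⟩
    ext x
    simp [(Submodule.Quotient.mk_eq_zero K).2 x.2]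

variable (R)

theorem exists_finite_injective_embedding [IsArtinianRing R] [Module.Finite R A]
    (M : ModuleCat.{u} A) [Module.Finite A M] :
    ∃ (I : ModuleCat.{u} A) (f : M →ₗ[A] I),
      Module.Finite A I ∧ Module.Injective A I ∧ Function.Injective f := by
  let Q := Injective.under M
  let ι : M →ₗ[A] Q := (Injective.ι M).hom
  have hι : Function.Injective ι := (ModuleCat.mono_iff_injective (Injective.ι M)).1 inferInstance
  have hQ : Module.Injective A Q := Module.injective_module_of_injective_object A Q
    (inj := inferInstanceAs (Injective (Injective.under M)))
  obtain ⟨E, hE⟩ := exists_maximal_isEssentialIn (LinearMap.range ι)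
  obtain ⟨r, hr⟩ := exists_retraction_of_maximal_isEssentialIn hQ hE
  refine ⟨ModuleCat.of A E, ι.codRestrict E fun x ↦ hE.1.1 ⟨x, rfl⟩, ?_,
    injective_of_retraction hQ hr, fun x y hxy ↦ hι (congrArg Subtype.val hxy)⟩
  let : Module R Q := Module.restrictScalars R A Q
  have : IsScalarTower R A Q := IsScalarTower.restrictScalars R A Q
  have : Module.Finite R (LinearMap.range ι) := Module.Finite.trans A _
  have : IsNoetherianRing A := .of_finite R A
  have : IsArtinianRing A := .of_finite R A
  have hA : IsFiniteLength A A :=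
    isFiniteLength_iff_isNoetherian_isArtinian.2 ⟨inferInstance, inferInstance⟩
  have := hE.1.isNoetherian_hom (R := R) hA
  have : IsNoetherian R E := isNoetherian_of_linearEquiv (LinearMap.ringLmapEquivSelf A R E)
  exact Module.Finite.of_restrictScalars_finite R A E

end EssentialExtensions

section Constructions

variable {A : Type u} [Ring A] {M M₁ M₂ M₃ N : ModuleCat.{u} A}
  {f : M₁ →ₗ[A] M₂} {g : M₂ →ₗ[A] M₃}

theorem shortExact_ker (hg : Function.Surjective g) :
    ShortExact (M₁ := ModuleCat.of A (LinearMap.ker g)) (LinearMap.ker g).subtype g :=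
  ⟨Subtype.val_injective, LinearMap.exact_subtype_ker_map g, hg⟩

theorem shortExact_mkQ (hf : Function.Injective f) :
    ShortExact (M₃ := ModuleCat.of A (M₂ ⧸ LinearMap.range f)) f (LinearMap.range f).mkQ :=
  ⟨hf, LinearMap.exact_map_mkQ_range f, Submodule.mkQ_surjective _⟩

theorem shortExact_prod (M N : ModuleCat.{u} A) :
    ShortExact (M₂ := ModuleCat.of A (M × N)) (LinearMap.inl A M N) (LinearMap.snd A M N) :=
  ⟨LinearMap.inl_injective, .inl_snd, LinearMap.snd_surjective⟩

theorem shortExact_linearEquiv_zero [Subsingleton N] (e : M₁ ≃ₗ[A] M₂) :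
    ShortExact e.toLinearMap (0 : M₂ →ₗ[A] N) :=
  ⟨e.injective, fun _ ↦ iff_of_true rfl (e.surjective _), Function.surjective_to_subsingleton _⟩

theorem exists_shortExact_projective (M : ModuleCat.{u} A) :
    ∃ (K P : ModuleCat.{u} A) (i : K →ₗ[A] P) (p : P →ₗ[A] M),
      ShortExact i p ∧ Module.Projective A P :=
  ⟨_, ModuleCat.of A (M →₀ A), _, Finsupp.linearCombination A id,
    shortExact_ker (Finsupp.linearCombination_id_surjective A M),
    inferInstanceAs (Module.Projective A (M →₀ A))⟩

theorem exists_shortExact_finite_projective (M : ModuleCat.{u} A) [Module.Finite A M] :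
    ∃ (K P : ModuleCat.{u} A) (i : K →ₗ[A] P) (p : P →ₗ[A] M),
      ShortExact i p ∧ Module.Finite A P ∧ Module.Projective A P := by
  obtain ⟨n, p, hp⟩ := Module.Finite.exists_fin' A M
  exact ⟨_, ModuleCat.of A (Fin n → A), _, p, shortExact_ker hp,
    inferInstanceAs (Module.Finite A (Fin n → A)),
    inferInstanceAs (Module.Projective A (Fin n → A))⟩

namespace ShortExact

theorem exists_factor (h : ShortExact f g) (φ : N →ₗ[A] M₂) (hφ : g ∘ₗ φ = 0) :
    ∃ ψ : N →ₗ[A] M₁, f ∘ₗ ψ = φ := by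
  have hrange (x : N) : φ x ∈ LinearMap.range f := (h.2.1 _).1 (LinearMap.congr_fun hφ x)
  refine ⟨(LinearEquiv.ofInjective f h.1).symm ∘ₗ φ.codRestrict _ hrange, LinearMap.ext fun x ↦ ?_⟩
  exact congrArg Subtype.val
    ((LinearEquiv.ofInjective f h.1).apply_symm_apply (φ.codRestrict _ hrange x))

theorem exists_desc (h : ShortExact f g) (φ : M₂ →ₗ[A] N) (hφ : φ ∘ₗ f = 0) :
    ∃ ψ : M₃ →ₗ[A] N, ψ ∘ₗ g = φ := by
  refine ⟨(LinearMap.range f).liftQ φ (LinearMap.range_le_ker_iff.2 hφ) ∘ₗ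
    (h.2.1.linearEquivOfSurjective h.2.2).symm.toLinearMap, LinearMap.ext fun x ↦ ?_⟩
  simp

theorem exists_pullback {X Y : ModuleCat.{u} A} {a : Y →ₗ[A] X} {b : X →ₗ[A] M₃}
    (h : ShortExact f g) (h' : ShortExact a b) :
    ∃ (E : ModuleCat.{u} A) (f' : M₁ →ₗ[A] E) (g' : E →ₗ[A] X) (a' : Y →ₗ[A] E)
      (b' : E →ₗ[A] M₂), ShortExact f' g' ∧ ShortExact a' b' := by
  let E : Submodule A (M₂ × X) := LinearMap.eqLocus (g ∘ₗ LinearMap.fst A M₂ X)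
    (b ∘ₗ LinearMap.snd A M₂ X)
  have hE {i : M₂} {x : X} : (i, x) ∈ E ↔ g i = b x := Iff.rfl
  refine ⟨ModuleCat.of A E,
    (LinearMap.inl A M₂ X ∘ₗ f).codRestrict E fun x ↦ ?_, LinearMap.snd A M₂ X ∘ₗ E.subtype,
    (LinearMap.inr A M₂ X ∘ₗ a).codRestrict E fun x ↦ ?_, LinearMap.fst A M₂ X ∘ₗ E.subtype,
    ⟨fun x y hxy ↦ h.1 (congrArg (fun e : E ↦ e.1.1) hxy), ?_, fun x ↦ ?_⟩,
    ⟨fun x y hxy ↦ h'.1 (congrArg (fun e : E ↦ e.1.2) hxy), ?_, fun x ↦ ?_⟩⟩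
  · exact (h.2.1.apply_apply_eq_zero x).trans (map_zero b).symm
  · exact (map_zero g).trans (h'.2.1.apply_apply_eq_zero x).symm
  · rintro ⟨⟨i, x⟩, hix⟩
    constructor
    · rintro rfl
      obtain ⟨m, rfl⟩ := (h.2.1 i).1 (by rw [hE.1 hix, map_zero])
      exact ⟨m, rfl⟩
    · rintro ⟨m, hm⟩
      exact (congrArg (fun e : E ↦ e.1.2) hm).symm
  · obtain ⟨i, hi⟩ := h.2.2 (b x)
    exact ⟨⟨(i, x), hi⟩, rfl⟩
  · rintro ⟨⟨i, x⟩, hix⟩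
    constructor
    · rintro rfl
      obtain ⟨m, rfl⟩ := (h'.2.1 x).1 (by rw [← hE.1 hix, map_zero])
      exact ⟨m, rfl⟩
    · rintro ⟨m, hm⟩
      exact (congrArg (fun e : E ↦ e.1.1) hm).symm
  · obtain ⟨i, hi⟩ := h'.2.2 (g x)
    exact ⟨⟨(x, i), hi.symm⟩, rfl⟩

theorem exists_ker_comp {X Y : ModuleCat.{u} A} {a : Y →ₗ[A] X} {b : X →ₗ[A] M₂}
    (h : ShortExact f g) (h' : ShortExact a b) :
    ∃ (K : ModuleCat.{u} A) (a' : Y →ₗ[A] K) (b' : K →ₗ[A] M₁) (i : K →ₗ[A] X),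
      ShortExact a' b' ∧ ShortExact i (g ∘ₗ b) := by
  let i : ModuleCat.of A (LinearMap.ker (g ∘ₗ b)) →ₗ[A] X := (LinearMap.ker (g ∘ₗ b)).subtype
  have hi : ShortExact i (g ∘ₗ b) := shortExact_ker (h.2.2.comp h'.2.2)
  obtain ⟨a', ha'⟩ := hi.exists_factor a
    (by rw [LinearMap.comp_assoc, h'.2.1.linearMap_comp_eq_zero, LinearMap.comp_zero])
  obtain ⟨b', hb'⟩ := h.exists_factor (b ∘ₗ i) hi.2.1.linearMap_comp_eq_zero
  replace ha' (y : Y) : i (a' y) = a y := LinearMap.congr_fun ha' y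
  replace hb' (x) : f (b' x) = b (i x) := LinearMap.congr_fun hb' x
  refine ⟨_, a', b', i, ⟨fun x y hxy ↦ h'.1 ?_, fun x ↦ ?_, fun m ↦ ?_⟩, hi⟩
  · rw [← ha', hxy, ha']
  · rw [← h.1.eq_iff, hb', map_zero, h'.2.1 (i x)]
    exact exists_congr fun y ↦ by rw [← ha', hi.1.eq_iff]
  · obtain ⟨x, hx⟩ := h'.2.2 (f m)
    obtain ⟨x, rfl⟩ := (hi.2.1 x).1 (by
      rw [LinearMap.comp_apply, hx, h.2.1.apply_apply_eq_zero])
    exact ⟨x, h.1 (by rw [hb', hx])⟩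

theorem middle_of_left {X Y Z : ModuleCat.{u} A} {a : Y →ₗ[A] X} {u : X →ₗ[A] M₁}
    {n : X →ₗ[A] Z} {z : Z →ₗ[A] M₃} {c : Z →ₗ[A] M₂} (h : ShortExact f g) (hu : ShortExact a u)
    (hn : ShortExact n z) (hcn : c ∘ₗ n = f ∘ₗ u) (hgc : g ∘ₗ c = z) : ShortExact (n ∘ₗ a) c := by
  replace hcn (x : X) : c (n x) = f (u x) := LinearMap.congr_fun hcn x
  replace hgc (x : Z) : g (c x) = z x := LinearMap.congr_fun hgc x
  refine ⟨hn.1.comp hu.1, fun x ↦ ⟨fun hx ↦ ?_, ?_⟩, fun e ↦ ?_⟩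
  · obtain ⟨x, rfl⟩ := (hn.2.1 x).1 (by rw [← hgc, hx, map_zero])
    obtain ⟨y, rfl⟩ := (hu.2.1 x).1 (h.1 (by rw [← hcn, hx, map_zero]))
    exact ⟨y, rfl⟩
  · rintro ⟨y, rfl⟩
    rw [LinearMap.comp_apply, hcn, hu.2.1.apply_apply_eq_zero, map_zero]
  · obtain ⟨t, ht⟩ := hn.2.2 (g e)
    obtain ⟨m, hm⟩ := (h.2.1 (e - c t)).1 (by rw [map_sub, hgc, ht, sub_self])
    obtain ⟨x, rfl⟩ := hu.2.2 m
    exact ⟨t + n x, by rw [map_add, hcn, hm, add_sub_cancel]⟩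

theorem exists_pushout (h : ShortExact f g) (k : M₁ →ₗ[A] N) :
    ∃ (Z : ModuleCat.{u} A) (n : N →ₗ[A] Z) (q : M₂ →ₗ[A] Z) (z : Z →ₗ[A] M₃),
      ShortExact n z ∧ n ∘ₗ k = q ∘ₗ f ∧ z ∘ₗ q = g ∧
      ∀ (W : ModuleCat.{u} A) (a : N →ₗ[A] W) (b : M₂ →ₗ[A] W), a ∘ₗ k = b ∘ₗ f →
        ∃ c : Z →ₗ[A] W, c ∘ₗ n = a ∧ c ∘ₗ q = b := by
  let j : M₁ →ₗ[A] ModuleCat.of A (N × M₂) := k.prod (-f)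
  obtain ⟨Z, π, hj⟩ : ∃ (Z : ModuleCat.{u} A) (π : ModuleCat.of A (N × M₂) →ₗ[A] Z),
      ShortExact j π :=
    ⟨_, _, shortExact_mkQ fun x y hxy ↦ h.1 (neg_injective (congrArg Prod.snd hxy))⟩
  have hglue (x : M₁) : π (k x, 0) = π (0, f x) := by
    rw [← sub_eq_zero, ← map_sub, Prod.mk_sub_mk, sub_zero, zero_sub]
    exact hj.2.1.apply_apply_eq_zero x
  have hdesc (W : ModuleCat.{u} A) (a : N →ₗ[A] W) (b : M₂ →ₗ[A] W) (hab : a ∘ₗ k = b ∘ₗ f) :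
      ∃ c : Z →ₗ[A] W, c ∘ₗ π = a.coprod b :=
    hj.exists_desc (a.coprod b) (LinearMap.ext fun x ↦ by
      simpa [j, ← sub_eq_add_neg, sub_eq_zero] using LinearMap.congr_fun hab x)
  obtain ⟨z, hz⟩ := hdesc M₃ 0 g (by rw [h.2.1.linearMap_comp_eq_zero, LinearMap.zero_comp])
  have hzπ (x : N) (y : M₂) : z (π (x, y)) = g y := by simpa using LinearMap.congr_fun hz (x, y)
  refine ⟨Z, π ∘ₗ LinearMap.inl A N M₂, π ∘ₗ LinearMap.inr A N M₂, z,
    ⟨?_, fun x ↦ ⟨fun hx ↦ ?_, ?_⟩, fun x ↦ ?_⟩, LinearMap.ext hglue, LinearMap.ext (hzπ 0),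
    fun W a b hab ↦ ?_⟩
  · refine (injective_iff_map_eq_zero _).2 fun x hx ↦ ?_
    obtain ⟨y, hy⟩ := (hj.2.1 (x, 0)).1 hx
    have hy₀ : y = 0 := h.1 (by
      rw [map_zero]; exact neg_eq_zero.1 (congrArg Prod.snd hy))
    rw [hy₀, map_zero] at hy
    exact (congrArg Prod.fst hy).symm
  · obtain ⟨⟨x, y⟩, rfl⟩ := hj.2.2 x
    obtain ⟨w, rfl⟩ := (h.2.1 y).1 (by rw [← hzπ x, hx])
    refine ⟨x + k w, ?_⟩
    rw [map_add, LinearMap.comp_apply, LinearMap.comp_apply, LinearMap.inl_apply,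
      LinearMap.inl_apply, hglue, ← map_add, Prod.mk_add_mk, add_zero, zero_add]
  · rintro ⟨x, rfl⟩
    exact (hzπ x 0).trans (map_zero g)
  · obtain ⟨y, rfl⟩ := h.2.2 x
    exact ⟨π (0, y), hzπ 0 y⟩
  · obtain ⟨c, hc⟩ := hdesc W a b hab
    exact ⟨c, by rw [← LinearMap.comp_assoc, hc, LinearMap.coprod_inl],
      by rw [← LinearMap.comp_assoc, hc, LinearMap.coprod_inr]⟩

theorem exists_lift_extension {X Y : ModuleCat.{u} A} {a : Y →ₗ[A] X} {u : X →ₗ[A] M₁}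
    (h : ShortExact f g) (hu : ShortExact a u) (hY : ExtVanishAbove 1 M₃ Y) :
    ∃ (Z : ModuleCat.{u} A) (n : X →ₗ[A] Z) (z : Z →ₗ[A] M₃) (a' : Y →ₗ[A] Z)
      (c : Z →ₗ[A] M₂), ShortExact n z ∧ ShortExact a' c := by
  obtain ⟨K, P, i, p, hP, hproj⟩ := exists_shortExact_projective M₃
  obtain ⟨q, hq⟩ := h.exists_lift (subsingleton_ext_of_projective hproj one_pos) p
  obtain ⟨k, hk⟩ := h.exists_factor (q ∘ₗ i)
    (by rw [← LinearMap.comp_assoc, hq, hP.2.1.linearMap_comp_eq_zero])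
  have hK : ExtVanish K Y := hP.extVanishAbove_contra₁ (extVanish_of_projective hproj) hY
  obtain ⟨l, rfl⟩ := hu.exists_lift (hK 1 one_pos) k
  obtain ⟨Z, n, t, z, hn, -, hzt, hdesc⟩ := hP.exists_pushout l
  obtain ⟨c, hcn, hct⟩ := hdesc M₂ (f ∘ₗ u) q (by rw [LinearMap.comp_assoc, hk])
  have hgc : g ∘ₗ c = z := by
    ext e
    obtain ⟨y, hy⟩ := hP.2.2 (z e)
    obtain ⟨x, hx⟩ := (hn.2.1 (e - t y)).1
      (by rw [map_sub, ← LinearMap.comp_apply z t, hzt, hy, sub_self])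
    have hgcn : g ∘ₗ c ∘ₗ n = 0 := by
      rw [hcn, ← LinearMap.comp_assoc, h.2.1.linearMap_comp_eq_zero, LinearMap.zero_comp]
    have hgct : g ∘ₗ c ∘ₗ t = p := by rw [hct, hq]
    rw [← hy, ← hgct, ← sub_eq_zero, ← LinearMap.comp_assoc, LinearMap.comp_apply _ t, ← map_sub,
      ← hx]
    exact LinearMap.congr_fun hgcn x
  exact ⟨Z, n, z, n ∘ₗ a, c, hn, h.middle_of_left hu hn hcn hgc⟩

end ShortExact
end Constructions

section Summands

variable {A : Type u} [Ring A] {M M₁ M₂ M₃ N S T : ModuleCat.{u} A}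
  {f : M₁ →ₗ[A] M₂} {g : M₂ →ₗ[A] M₃} {n : ℕ}

namespace IsSummand

theorem of_linearEquiv (e : M ≃ₗ[A] N) : IsSummand M N :=
  ⟨e, e.symm, LinearMap.ext e.symm_apply_apply⟩

theorem of_subsingleton [Subsingleton M] : IsSummand M N :=
  ⟨0, 0, LinearMap.ext fun _ ↦ Subsingleton.elim _ _⟩

theorem trans (h : IsSummand M N) (h' : IsSummand N S) : IsSummand M S := by
  obtain ⟨s, r, hrs⟩ := h
  obtain ⟨s', r', hrs'⟩ := h'
  exact ⟨s' ∘ₗ s, r ∘ₗ r', by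
    rw [LinearMap.comp_assoc, ← LinearMap.comp_assoc s, hrs', LinearMap.id_comp, hrs]⟩

theorem finite (h : IsSummand M S) (hS : Module.Finite A S) : Module.Finite A M := by
  obtain ⟨s, r, hrs⟩ := h
  exact Module.Finite.of_surjective r fun x ↦ ⟨s x, LinearMap.congr_fun hrs x⟩

theorem pdLE (h : IsSummand M S) (hS : pdLE S n) : pdLE M n :=
  fun i hi N ↦ h.subsingleton_ext_left (by lia) (hS i hi N)

theorem exists_prod_linearEquiv (h : IsSummand M S) :
    ∃ K : ModuleCat.{u} A, Nonempty (S ≃ₗ[A] M × K) := by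
  obtain ⟨s, r, hrs⟩ := h
  let e := (LinearMap.exact_subtype_ker_map r).splitSurjectiveEquiv Subtype.val_injective ⟨s, hrs⟩
  exact ⟨ModuleCat.of A (LinearMap.ker r), ⟨e.1.trans (LinearEquiv.prodComm A _ _)⟩⟩

end IsSummand

theorem isSummand_prod_left (M N : ModuleCat.{u} A) : IsSummand M (ModuleCat.of A (M × N)) :=
  ⟨LinearMap.inl A M N, LinearMap.fst A M N, LinearMap.fst_comp_inl A M N⟩

theorem isSummand_prod_right (M N : ModuleCat.{u} A) : IsSummand N (ModuleCat.of A (M × N)) :=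
  ⟨LinearMap.inr A M N, LinearMap.snd A M N, LinearMap.snd_comp_inr A M N⟩

theorem extVanish_of_subsingleton [Subsingleton N] : ExtVanish M N :=
  extVanish_of_injective ⟨fun _ _ _ _ _ _ _ _ _ ↦ ⟨0, fun _ ↦ Subsingleton.elim _ _⟩⟩

theorem pdLE_of_projective (hM : Module.Projective A M) : pdLE M n :=
  fun _ hi _ ↦ subsingleton_ext_of_projective hM (by lia)

namespace ShortExact

theorem isSummand_right (h : ShortExact f g) (h₁ : Subsingleton (ext M₃ M₁ 1)) :
    IsSummand M₃ M₂ := by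
  obtain ⟨s, hs⟩ := h.exists_lift h₁ LinearMap.id
  exact ⟨s, g, hs⟩

theorem pdLE_mid (h : ShortExact f g) (h₁ : pdLE M₁ n) (h₃ : pdLE M₃ n) : pdLE M₂ n :=
  pdLE_iff.2 fun N ↦ h.extVanishAbove_contra₂ (pdLE_iff.1 h₁ N) (pdLE_iff.1 h₃ N)

theorem pdLE_left (h : ShortExact f g) (h₂ : pdLE M₂ n) (h₃ : pdLE M₃ (n + 1)) : pdLE M₁ n :=
  pdLE_iff.2 fun N ↦ h.extVanishAbove_contra₁ (pdLE_iff.1 h₂ N) (pdLE_iff.1 h₃ N)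

theorem finite_left [IsNoetherianRing A] [Module.Finite A M₂] (h : ShortExact f g) :
    Module.Finite A M₁ :=
  Module.Finite.of_injective f h.1

theorem finite_mid [Module.Finite A M₁] [Module.Finite A M₃] (h : ShortExact f g) :
    Module.Finite A M₂ :=
  Module.Finite.of_exact h.2.1 h.2.2

end ShortExact

theorem projective_of_pdLE_zero (h : pdLE M 0) : Module.Projective A M := by
  obtain ⟨K, P, i, p, hP, hproj⟩ := exists_shortExact_projective M
  obtain ⟨s, r, hrs⟩ := hP.isSummand_right (h 1 one_pos K)
  exact Module.Projective.of_split s r hrs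

end Summands

section Classes

variable {A : Type u} [Ring A]

/-- The class `𝒞` is closed under extensions. -/
def ClosedUnderExtensions (𝒞 : ModuleCat.{u} A → Prop) : Prop :=
  ∀ ⦃M₁ M₂ M₃ : ModuleCat.{u} A⦄ ⦃f : M₁ →ₗ[A] M₂⦄ ⦃g : M₂ →ₗ[A] M₃⦄,
    ShortExact f g → 𝒞 M₁ → 𝒞 M₃ → 𝒞 M₂

/-- The class `𝒞` is closed under kernels of surjections. -/
def ClosedUnderKernels (𝒞 : ModuleCat.{u} A → Prop) : Prop :=
  ∀ ⦃M₁ M₂ M₃ : ModuleCat.{u} A⦄ ⦃f : M₁ →ₗ[A] M₂⦄ ⦃g : M₂ →ₗ[A] M₃⦄,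
    ShortExact f g → 𝒞 M₂ → 𝒞 M₃ → 𝒞 M₁

variable {𝒞 : ModuleCat.{u} A → Prop} {M N T T' : ModuleCat.{u} A} {m : ℕ}

theorem Resolving.closedUnderExtensions (h : Resolving 𝒞) : ClosedUnderExtensions 𝒞 :=
  fun _ _ _ _ _ ↦ h.2.1 _ _ _ _ _

theorem Resolving.closedUnderKernels (h : Resolving 𝒞) : ClosedUnderKernels 𝒞 :=
  fun _ _ _ _ _ ↦ h.2.2 _ _ _ _ _

theorem closedUnderExtensions_extVanishAbove_left (m : ℕ) (N : ModuleCat.{u} A) :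
    ClosedUnderExtensions fun M ↦ ExtVanishAbove m M N :=
  fun _ _ _ _ _ h ↦ h.extVanishAbove_contra₂

theorem closedUnderExtensions_inPerpOf (𝒞 : ModuleCat.{u} A → Prop) :
    ClosedUnderExtensions (InPerpOf 𝒞) :=
  fun _ _ _ _ _ h h₁ h₃ N hN ↦ h.extVanishAbove_cov₂ (h₁ N hN) (h₃ N hN)

theorem closedUnderExtensions_inP : ClosedUnderExtensions (InP (A := A)) := by
  rintro M₁ M₂ M₃ f g h ⟨_, n₁, hn₁⟩ ⟨_, n₃, hn₃⟩
  exact ⟨h.finite_mid, max n₁ n₃,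
    h.pdLE_mid (hn₁.mono (le_max_left n₁ n₃)) (hn₃.mono (le_max_right n₁ n₃))⟩

theorem closedUnderKernels_inP [IsNoetherianRing A] : ClosedUnderKernels (InP (A := A)) := by
  rintro M₁ M₂ M₃ f g h ⟨_, n₂, hn₂⟩ ⟨-, n₃, hn₃⟩
  exact ⟨h.finite_left, max n₂ n₃,
    h.pdLE_left (hn₂.mono (le_max_left n₂ n₃)) (hn₃.mono (by lia))⟩

theorem inAddOf_eq_iff :
    InAddOf (fun Y ↦ Y = T) M ↔ ∃ k : ℕ, IsSummand M (ModuleCat.of A (Fin k → T)) := by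
  constructor
  · rintro ⟨k, F, hF, h⟩
    obtain rfl : F = fun _ ↦ T := funext hF
    exact ⟨k, h.trans (.of_linearEquiv (DirectSum.linearEquivFunOnFintype A (Fin k) fun _ ↦ ↥T))⟩
  · rintro ⟨k, h⟩
    exact ⟨k, fun _ ↦ T, fun _ ↦ rfl,
      h.trans (.of_linearEquiv (DirectSum.linearEquivFunOnFintype A (Fin k) fun _ ↦ ↥T).symm)⟩

theorem inAddOf_pi (T : ModuleCat.{u} A) (k : ℕ) :
    InAddOf (fun Y ↦ Y = T) (ModuleCat.of A (Fin k → T)) :=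
  inAddOf_eq_iff.2 ⟨k, .of_linearEquiv (.refl A _)⟩

theorem inAddOf_self (T : ModuleCat.{u} A) : InAddOf (fun Y ↦ Y = T) T :=
  inAddOf_eq_iff.2 ⟨1, .of_linearEquiv (LinearEquiv.funUnique (Fin 1) A T).symm⟩

namespace InAddOf

theorem of_isSummand (hN : InAddOf (fun Y ↦ Y = T) N) (h : IsSummand M N) :
    InAddOf (fun Y ↦ Y = T) M := by
  obtain ⟨k, hk⟩ := inAddOf_eq_iff.1 hN
  exact inAddOf_eq_iff.2 ⟨k, h.trans hk⟩

theorem mono_isSummand (hM : InAddOf (fun Y ↦ Y = T) M) (h : IsSummand T T') :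
    InAddOf (fun Y ↦ Y = T') M := by
  obtain ⟨k, hk⟩ := inAddOf_eq_iff.1 hM
  obtain ⟨s, r, hrs⟩ := h
  refine inAddOf_eq_iff.2 ⟨k, hk.trans ⟨s.compLeft (Fin k), r.compLeft (Fin k), ?_⟩⟩
  exact LinearMap.ext fun v ↦ funext fun i ↦ LinearMap.congr_fun hrs (v i)

theorem mem_of_closed (hM : InAddOf (fun Y ↦ Y = T) M)
    (hzero : ∀ M : ModuleCat.{u} A, Subsingleton M → 𝒞 M) (hext : ClosedUnderExtensions 𝒞)
    (hsummand : ∀ M N : ModuleCat.{u} A, IsSummand M N → 𝒞 N → 𝒞 M) (hT : 𝒞 T) : 𝒞 M := by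
  obtain ⟨k, hk⟩ := inAddOf_eq_iff.1 hM
  refine hsummand _ _ hk ?_
  clear hk
  induction k with
  | zero => exact hzero _ (inferInstanceAs (Subsingleton (Fin 0 → T)))
  | succ k ih =>
    exact hsummand _ _ (.of_linearEquiv (Fin.consLinearEquiv A fun _ ↦ ↥T).symm)
      (hext (shortExact_prod T (ModuleCat.of A (Fin k → T))) hT ih)

theorem extVanishAbove_left (hM : InAddOf (fun Y ↦ Y = T) M) (hT : ExtVanishAbove m T N) :
    ExtVanishAbove m M N :=
  hM.mem_of_closed (fun _ _ _ hi ↦ subsingleton_ext_of_projective .of_free (by lia))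
    (closedUnderExtensions_extVanishAbove_left m N)
    (fun _ _ h hN i hi ↦ h.subsingleton_ext_left (by lia) (hN i hi)) hT

theorem extVanish_left (hM : InAddOf (fun Y ↦ Y = T) M) (hT : ExtVanish T N) : ExtVanish M N :=
  hM.extVanishAbove_left hT

theorem extVanish_right (hN : InAddOf (fun Y ↦ Y = T) N) (hT : ExtVanish M T) : ExtVanish M N :=
  hN.mem_of_closed (𝒞 := ExtVanish M)
    (fun _ _ ↦ extVanish_of_subsingleton) (fun _ _ _ _ _ h ↦ h.extVanishAbove_cov₂)
    (fun _ _ h ↦ h.extVanish_right) hT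

theorem inP (hM : InAddOf (fun Y ↦ Y = T) M) (hT : InP T) : InP M := by
  obtain ⟨hTfin, n, hn⟩ := hT
  obtain ⟨k, hk⟩ := inAddOf_eq_iff.1 hM
  exact ⟨hk.finite (inferInstanceAs (Module.Finite A (Fin k → T))), n,
    pdLE_iff.2 fun N ↦ hM.extVanishAbove_left (pdLE_iff.1 hn N)⟩

end InAddOf

end Classes

section ResolvingSubcategories

variable {A : Type u} [Ring A] {X : ModuleCat.{u} A → Prop} {K M N P Z : ModuleCat.{u} A}

theorem ShortExact.prodMap {M₁ M₂ M₃ N₁ N₂ N₃ : ModuleCat.{u} A} {f : M₁ →ₗ[A] M₂}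
    {g : M₂ →ₗ[A] M₃} {f' : N₁ →ₗ[A] N₂} {g' : N₂ →ₗ[A] N₃} (h : ShortExact f g)
    (h' : ShortExact f' g') :
    ShortExact (M₁ := ModuleCat.of A (M₁ × N₁)) (M₂ := ModuleCat.of A (M₂ × N₂))
      (M₃ := ModuleCat.of A (M₃ × N₃)) (f.prodMap f') (g.prodMap g') := by
  refine ⟨h.1.prodMap h'.1, ?_, h.2.2.prodMap h'.2.2⟩
  rintro ⟨x, y⟩
  simp [Prod.ext_iff, h.2.1 x, h'.2.1 y]

theorem ShortExact.prod_right {M₁ M₂ M₃ : ModuleCat.{u} A} {f : M₁ →ₗ[A] M₂} {g : M₂ →ₗ[A] M₃}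
    (h : ShortExact f g) (N : ModuleCat.{u} A) :
    ShortExact (M₂ := ModuleCat.of A (M₂ × N)) (M₃ := ModuleCat.of A (M₃ × N))
      (LinearMap.inl A M₂ N ∘ₗ f) (g.prodMap LinearMap.id) := by
  refine ⟨LinearMap.inl_injective.comp h.1, ?_, h.2.2.prodMap Function.surjective_id⟩
  rintro ⟨x, y⟩
  simp [Prod.ext_iff, h.2.1 x, eq_comm (a := (0 : N))]

namespace Resolving

theorem of_subsingleton (hX : Resolving X) [Subsingleton M] : X M :=
  hX.1 M inferInstance .of_free

theorem of_linearEquiv (hX : Resolving X) (e : M ≃ₗ[A] N) (hN : X N) : X M :=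
  hX.closedUnderKernels (shortExact_linearEquiv_zero (N := ModuleCat.of A PUnit.{u + 1}) e) hN
    hX.of_subsingleton

theorem prod (hX : Resolving X) (hM : X M) (hN : X N) : X (ModuleCat.of A (M × N)) :=
  hX.closedUnderExtensions (shortExact_prod M N) hM hN

theorem left_of_prod {i : Z →ₗ[A] P} {p : P →ₗ[A] M} (hX : Resolving X) (h : ShortExact i p)
    (hZ : X Z) (hP : X P) (hMK : X (ModuleCat.of A (M × K))) : X M := by
  have hPK : X (ModuleCat.of A (P × K)) := hX.closedUnderExtensions (h.prod_right K) hZ hMK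
  have hKP : X (ModuleCat.of A (K × P)) := hX.of_linearEquiv (LinearEquiv.prodComm A K P) hPK
  exact hX.closedUnderKernels ((shortExact_prod M K).prod_right P) (hX.prod hMK hP) hKP

theorem left_of_prod_of_pdLE (hX : Resolving X) (hfin : ∀ M, X M → Module.Finite A M) {n : ℕ}
    (hMK : X (ModuleCat.of A (M × K))) (hn : pdLE (ModuleCat.of A (M × K)) n) : X M := by
  induction n generalizing M K with
  | zero =>
    have hsum := isSummand_prod_left M K
    exact hX.1 M (hsum.finite (hfin _ hMK)) (projective_of_pdLE_zero (hsum.pdLE hn))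
  | succ n ih =>
    have := (isSummand_prod_left M K).finite (hfin _ hMK)
    have := (isSummand_prod_right M K).finite (hfin _ hMK)
    obtain ⟨Z, P, i, p, hi, hPfin, hPproj⟩ := exists_shortExact_finite_projective M
    obtain ⟨Z', P', i', p', hi', hPfin', hPproj'⟩ := exists_shortExact_finite_projective K
    have hP : X P := hX.1 P hPfin hPproj
    have hP' : X P' := hX.1 P' hPfin' hPproj'
    have hpd : pdLE (ModuleCat.of A (P × P')) n :=
      pdLE_of_projective (inferInstanceAs (Module.Projective A (P × P')))
    have hZ : X Z := ih (hX.closedUnderKernels (hi.prodMap hi') (hX.prod hP hP') hMK)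
      ((hi.prodMap hi').pdLE_left hpd hn)
    exact hX.left_of_prod hi hZ hP hMK

theorem of_isSummand (hX : Resolving X) (hP : ∀ M, X M → InP M) (h : IsSummand M N) (hN : X N) :
    X M := by
  obtain ⟨K, ⟨e⟩⟩ := h.exists_prod_linearEquiv
  have hMK : X (ModuleCat.of A (M × K)) := hX.of_linearEquiv e.symm hN
  obtain ⟨n, hn⟩ := (hP _ hMK).2
  exact hX.left_of_prod_of_pdLE (fun M hM ↦ (hP M hM).1) hMK hn

theorem surjective_of_isRightApprox [Module.Finite A M] (hX : Resolving X) {f : N →ₗ[A] M}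
    (hf : IsRightApprox X f) : Function.Surjective f := by
  obtain ⟨_, P, _, p, hp, hPfin, hPproj⟩ := exists_shortExact_finite_projective M
  obtain ⟨h, rfl⟩ := hf.2 P (hX.1 P hPfin hPproj) p
  exact Function.Surjective.of_comp (f := f) (g := h) hp.2.2

theorem inPerpOf_of_subsingleton_ext_one (hX : Resolving X) (hfin : ∀ M, X M → Module.Finite A M)
    (hN : ∀ M, X M → Subsingleton (ext M N 1)) : InPerpOf X N := by
  intro M hM i hi
  induction i, hi using Nat.le_induction generalizing M with
  | base => exact hN M hM
  | succ i hi ih =>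
    have := hfin M hM
    obtain ⟨Z, P, _, _, h, hPfin, hPproj⟩ := exists_shortExact_finite_projective M
    have hZ : X Z := hX.closedUnderKernels h (hX.1 P hPfin hPproj) hM
    exact h.subsingleton_ext_contra₃ hi (ih Z hZ)
      (subsingleton_ext_of_projective hPproj i.succ_pos)

end Resolving

end ResolvingSubcategories

section MinimalApproximations

variable {A : Type u} [Ring A] {𝒞 : ModuleCat.{u} A → Prop} {L M N S Y Z : ModuleCat.{u} A}
  {f : N →ₗ[A] M}

theorem exists_isSummand_range_pow [IsArtinianRing A] [Module.Finite A N] (φ : N →ₗ[A] N) :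
    ∃ n : ℕ, IsSummand (ModuleCat.of A (LinearMap.range (φ ^ n))) N ∧
      (LinearMap.range (φ ^ n) = ⊤ → Function.Bijective φ) := by
  obtain ⟨n, hcompl, hn⟩ :=
    (φ.eventually_isCompl_ker_pow_range_pow.and (Filter.eventually_ne_atTop 0)).exists
  refine ⟨n, ⟨(LinearMap.range (φ ^ n)).subtype,
    (LinearMap.range (φ ^ n)).projectionOnto _ hcompl.symm, ?_⟩, fun htop ↦ ?_⟩
  · exact LinearMap.ext fun x ↦ Submodule.projectionOnto_apply_left hcompl.symm x
  · obtain ⟨m, rfl⟩ := Nat.exists_eq_add_one_of_ne_zero hn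
    have hsurj : Function.Surjective (φ ^ (m + 1)) := LinearMap.range_eq_top.1 htop
    rw [pow_succ'] at hsurj
    exact IsNoetherian.bijective_of_surjective_endomorphism φ
      (Function.Surjective.of_comp (g := ⇑(φ ^ m)) hsurj)

theorem IsRightApprox.comp_subtype_range {φ : N →ₗ[A] N} (hf : IsRightApprox 𝒞 f)
    (hφ : f ∘ₗ φ = f) (hmem : 𝒞 (ModuleCat.of A (LinearMap.range φ))) :
    IsRightApprox 𝒞 (XM := ModuleCat.of A (LinearMap.range φ))
      (f ∘ₗ (LinearMap.range φ).subtype) := by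
  refine ⟨hmem, fun Y hY k ↦ ?_⟩
  obtain ⟨k, rfl⟩ := hf.2 Y hY k
  exact ⟨φ.rangeRestrict ∘ₗ k, LinearMap.ext fun y ↦ LinearMap.congr_fun hφ (k y)⟩

theorem ContravariantlyFinite.exists_isMinimalRightApprox [IsArtinianRing A]
    (hc : ContravariantlyFinite 𝒞) (hfin : ∀ M, 𝒞 M → Module.Finite A M)
    (hsummand : ∀ M N : ModuleCat.{u} A, IsSummand M N → 𝒞 N → 𝒞 M) [hM : Module.Finite A M] :
    ∃ (N : ModuleCat.{u} A) (f : N →ₗ[A] M), IsMinimalRightApprox 𝒞 f := by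
  obtain ⟨N₀, f₀, hf₀⟩ := hc M hM
  obtain ⟨⟨N, f⟩, hf, hmin⟩ := WellFounded.has_min
    (InvImage.wf (fun p : (N : ModuleCat.{u} A) × (N →ₗ[A] M) ↦ Module.length A p.1) wellFounded_lt)
    {p | IsRightApprox 𝒞 p.2} ⟨⟨N₀, f₀⟩, hf₀⟩
  refine ⟨N, f, hf, fun φ hφ ↦ ?_⟩
  have := hfin N hf.1
  obtain ⟨n, hn, hbij⟩ := exists_isSummand_range_pow φ
  have hpow : f ∘ₗ (φ ^ n) = f := by
    clear hn hbij
    induction n with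
    | zero => rfl
    | succ n ih => rw [pow_succ, Module.End.mul_eq_comp, ← LinearMap.comp_assoc, ih, hφ]
  refine hbij (by_contra fun hne ↦ ?_)
  exact hmin ⟨_, _⟩ (hf.comp_subtype_range hpow (hsummand _ _ hn hf.1)) (Submodule.length_lt hne)

namespace IsMinimalRightApprox

theorem exists_retraction (hf : IsMinimalRightApprox 𝒞 f) (hZ : 𝒞 Z) {n : N →ₗ[A] Z}
    {c : Z →ₗ[A] M} (hc : c ∘ₗ n = f) : ∃ r : Z →ₗ[A] N, r ∘ₗ n = LinearMap.id ∧ f ∘ₗ r = c := by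
  obtain ⟨h, rfl⟩ := hf.1.2 Z hZ c
  let e := LinearEquiv.ofBijective (h ∘ₗ n) (hf.2 _ hc)
  refine ⟨e.symm.toLinearMap ∘ₗ h, LinearMap.ext e.symm_apply_apply, LinearMap.ext fun x ↦ ?_⟩
  obtain ⟨y, hy⟩ := e.surjective (h x)
  have hfy : f (e y) = f y := LinearMap.congr_fun hc y
  change f (e.symm (h x)) = f (h x)
  rw [← hy, e.symm_apply_apply, hfy]

theorem isSummand {g : Z →ₗ[A] S} (hf : IsMinimalRightApprox 𝒞 f) (hg : IsRightApprox 𝒞 g)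
    (h : IsSummand M S) : IsSummand N Z := by
  obtain ⟨s, r, hrs⟩ := h
  obtain ⟨u, hu⟩ := hg.2 N hf.1.1 (s ∘ₗ f)
  obtain ⟨v, hv, -⟩ := hf.exists_retraction hg.1 (n := u) (c := r ∘ₗ g)
    (by rw [LinearMap.comp_assoc, hu, ← LinearMap.comp_assoc, hrs, LinearMap.id_comp])
  exact ⟨u, v, hv⟩

-- Wakamatsu's lemma: the pushout of `0 → ΩL → P → L → 0` along `ΩL → Y → N` lies in `𝒞`, so it
-- retracts onto `N` over `M`.
theorem subsingleton_ext_one {a : Y →ₗ[A] N} (hf : IsMinimalRightApprox 𝒞 f)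
    (hext : ClosedUnderExtensions 𝒞) (h : ShortExact a f) (hL : 𝒞 L) :
    Subsingleton (ext L Y 1) := by
  obtain ⟨K, P, i, p, hP, hproj⟩ := exists_shortExact_projective L
  refine hP.subsingleton_ext_one_of_extend (fun φ ↦ ?_)
    (subsingleton_ext_of_projective hproj one_pos)
  obtain ⟨Z, n, q, z, hn, hglue, -, hdesc⟩ := hP.exists_pushout (a ∘ₗ φ)
  obtain ⟨c, hcn, hcq⟩ := hdesc M f 0 (by
    rw [← LinearMap.comp_assoc, h.2.1.linearMap_comp_eq_zero, LinearMap.zero_comp,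
      LinearMap.zero_comp])
  obtain ⟨r, hrn, hfr⟩ := hf.exists_retraction (hext hn hf.1.1 hL) hcn
  obtain ⟨ψ, hψ⟩ := h.exists_factor (r ∘ₗ q) (by rw [← LinearMap.comp_assoc, hfr, hcq])
  refine ⟨ψ, LinearMap.ext fun x ↦ h.1 ?_⟩
  change (a ∘ₗ ψ ∘ₗ i) x = (a ∘ₗ φ) x
  rw [← LinearMap.comp_assoc, hψ, LinearMap.comp_assoc, ← hglue, ← LinearMap.comp_assoc, hrn,
    LinearMap.id_comp]

end IsMinimalRightApprox

end MinimalApproximations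

section SpecialApproximations

variable {A : Type u} [Ring A] {𝒞 𝒞' 𝒴 𝒴' : ModuleCat.{u} A → Prop}
  {M M₁ M₂ M₃ : ModuleCat.{u} A} {f : M₁ →ₗ[A] M₂} {g : M₂ →ₗ[A] M₃}

/-- There is an exact sequence `0 → Y → C → M → 0` with `C ∈ 𝒞` and `Y ∈ 𝒴`. When
`Ext^1(𝒞, 𝒴) = 0`, the map `C → M` is a special right `𝒞`-approximation of `M`. -/
def HasSpecialPrecover (𝒞 𝒴 : ModuleCat.{u} A → Prop) (M : ModuleCat.{u} A) : Prop :=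
  ∃ (Y C : ModuleCat.{u} A) (a : Y →ₗ[A] C) (b : C →ₗ[A] M), ShortExact a b ∧ 𝒞 C ∧ 𝒴 Y

/-- There is an exact sequence `0 → M → E → C → 0` with `E ∈ 𝒴` and `C ∈ 𝒞`. When
`Ext^1(𝒞, 𝒴) = 0`, the map `M → E` is a special left `𝒴`-approximation of `M`. -/
def HasSpecialPreenvelope (𝒞 𝒴 : ModuleCat.{u} A → Prop) (M : ModuleCat.{u} A) : Prop :=
  ∃ (E C : ModuleCat.{u} A) (a : M →ₗ[A] E) (b : E →ₗ[A] C), ShortExact a b ∧ 𝒴 E ∧ 𝒞 C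

theorem HasSpecialPrecover.mono (h : HasSpecialPrecover 𝒞 𝒴 M) (h𝒞 : ∀ M, 𝒞 M → 𝒞' M) :
    HasSpecialPrecover 𝒞' 𝒴 M := by
  obtain ⟨Y, C, a, b, hab, hC, hY⟩ := h
  exact ⟨Y, C, a, b, hab, h𝒞 C hC, hY⟩

theorem HasSpecialPrecover.exists_isRightApprox (h : HasSpecialPrecover 𝒞 𝒴 M)
    (hext : ∀ C Y, 𝒞 C → 𝒴 Y → Subsingleton (ext C Y 1)) :
    ∃ (C : ModuleCat.{u} A) (b : C →ₗ[A] M), IsRightApprox 𝒞 b := by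
  obtain ⟨Y, C, a, b, hab, hC, hY⟩ := h
  exact ⟨C, b, hC, fun D hD ↦ hab.exists_lift (hext D Y hD hY)⟩

namespace ShortExact

theorem hasSpecialPreenvelope_left (h : ShortExact f g) (h𝒴 : ClosedUnderExtensions 𝒴)
    (h₂ : 𝒴 M₂) (h₃ : HasSpecialPrecover 𝒞 𝒴 M₃) : HasSpecialPreenvelope 𝒞 𝒴 M₁ := by
  obtain ⟨Y, C, a, b, hab, hC, hY⟩ := h₃
  obtain ⟨E, f', g', a', b', hE, hE'⟩ := h.exists_pullback hab
  exact ⟨E, C, f', g', hE, h𝒴 hE' hY h₂, hC⟩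

theorem hasSpecialPrecover_left (h : ShortExact f g) (h𝒞 : ClosedUnderKernels 𝒞)
    (h₂ : HasSpecialPrecover 𝒞 𝒴 M₂) (h₃ : 𝒞 M₃) : HasSpecialPrecover 𝒞 𝒴 M₁ := by
  obtain ⟨Y, C, a, b, hab, hC, hY⟩ := h₂
  obtain ⟨K, a', b', i, hK, hi⟩ := h.exists_ker_comp hab
  exact ⟨Y, K, a', b', hK, h𝒞 hi hC h₃, hY⟩

end ShortExact

theorem closedUnderExtensions_hasSpecialPrecover (h𝒞 : ClosedUnderExtensions 𝒞)
    (h𝒴 : ClosedUnderExtensions 𝒴) (hext : ∀ C Y, 𝒞 C → 𝒴 Y → ExtVanishAbove 1 C Y) :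
    ClosedUnderExtensions (HasSpecialPrecover 𝒞 𝒴) := by
  rintro M₁ M₂ M₃ f g h ⟨Y₁, C₁, a₁, b₁, h₁, hC₁, hY₁⟩ ⟨Y₃, C₃, a₃, b₃, h₃, hC₃, hY₃⟩
  obtain ⟨E, _, _, _, _, hE, hE'⟩ := h.exists_pullback h₃
  obtain ⟨C, _, _, _, _, hC, hC'⟩ := hE.exists_lift_extension h₁ (hext C₃ Y₁ hC₃ hY₁)
  obtain ⟨Y, _, _, i, hY, hi⟩ := hE'.exists_ker_comp hC'
  exact ⟨Y, C, i, _, hi, h𝒞 hC hC₁ hC₃, h𝒴 hY hY₁ hY₃⟩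

theorem ClosedUnderExtensions.mem_of_finite [IsArtinianRing A] (h𝒞 : ClosedUnderExtensions 𝒞)
    (hzero : ∀ M : ModuleCat.{u} A, Subsingleton M → 𝒞 M)
    (hsimple : ∀ S : ModuleCat.{u} A, IsSimpleModule A S → 𝒞 S) [Module.Finite A M] : 𝒞 M := by
  suffices ∀ (M : Type u) [AddCommGroup M] [Module A M], IsFiniteLength A M →
      𝒞 (ModuleCat.of A M) from
    this M (isFiniteLength_iff_isNoetherian_isArtinian.2 ⟨inferInstance, inferInstance⟩)
  intro M _ _ hM
  induction hM with
  | of_subsingleton => exact hzero _ ‹_›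
  | @of_simple_quotient M _ _ K hK _ ih =>
    exact h𝒞 (M₂ := ModuleCat.of A M) (M₃ := ModuleCat.of A (M ⧸ K)) (f := K.subtype) (g := K.mkQ)
      ⟨Subtype.val_injective, LinearMap.exact_subtype_mkQ K, K.mkQ_surjective⟩ ih (hsimple _ hK)

theorem isSummand_quotient_jacobson [IsArtinianRing A] (S : ModuleCat.{u} A) [IsSimpleModule A S] :
    IsSummand S (ModuleCat.of A (A ⧸ Ring.jacobson A)) := by
  obtain ⟨m, hm, ⟨e⟩⟩ := isSimpleModule_iff_quot_maximal.1 ‹IsSimpleModule A S›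
  have : IsSemisimpleModule A (A ⧸ Ring.jacobson A) :=
    (IsArtinian.isSemisimpleModule_iff_jacobson A _).2 (Module.jacobson_quotient_jacobson A A)
  obtain ⟨s, hs⟩ := IsSemisimpleModule.lifting_property _
    (Submodule.factor_surjective (Ring.jacobson_le_of_isMaximal m)) e.toLinearMap
  exact ⟨s, e.symm.toLinearMap ∘ₗ Submodule.factor (Ring.jacobson_le_of_isMaximal m),
    LinearMap.ext fun x ↦ e.symm_apply_eq.2 (LinearMap.congr_fun hs x)⟩

theorem exists_shortExact_finite_injective (R : Type*) [CommRing R] [IsArtinianRing R]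
    [Algebra R A] [Module.Finite R A] (M : ModuleCat.{u} A) [Module.Finite A M] :
    ∃ (I C : ModuleCat.{u} A) (i : M →ₗ[A] I) (p : I →ₗ[A] C),
      ShortExact i p ∧ Module.Finite A I ∧ Module.Injective A I ∧ Module.Finite A C := by
  obtain ⟨I, i, hIfin, hIinj, hi⟩ := exists_finite_injective_embedding R M
  exact ⟨I, _, i, _, shortExact_mkQ hi, hIfin, hIinj,
    inferInstanceAs (Module.Finite A (I ⧸ LinearMap.range i))⟩

namespace Resolving

variable [IsArtinianRing A] {X : ModuleCat.{u} A → Prop}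

theorem exists_shortExact_isMinimalRightApprox (hX : Resolving X) (hP : ∀ M, X M → InP M)
    (hc : ContravariantlyFinite X) (M : ModuleCat.{u} A) [Module.Finite A M] :
    ∃ (Y N : ModuleCat.{u} A) (a : Y →ₗ[A] N) (b : N →ₗ[A] M),
      ShortExact a b ∧ IsMinimalRightApprox X b ∧ InPerpOf X Y := by
  have hfin (M) (hM : X M) : Module.Finite A M := (hP M hM).1
  obtain ⟨N, b, hb⟩ :=
    hc.exists_isMinimalRightApprox (M := M) hfin fun _ _ ↦ hX.of_isSummand hP
  have hker := shortExact_ker (hX.surjective_of_isRightApprox hb.1)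
  exact ⟨_, N, _, b, hker, hb, hX.inPerpOf_of_subsingleton_ext_one hfin fun L hL ↦
    hb.subsingleton_ext_one hX.closedUnderExtensions hker hL⟩

theorem hasSpecialPrecover (hX : Resolving X) (hP : ∀ M, X M → InP M)
    (hc : ContravariantlyFinite X) (M : ModuleCat.{u} A) [Module.Finite A M] :
    HasSpecialPrecover X (InPerpOf X) M := by
  obtain ⟨Y, N, a, b, hab, hb, hY⟩ := hX.exists_shortExact_isMinimalRightApprox hP hc M
  exact ⟨Y, N, a, b, hab, hb.1.1, hY⟩

theorem exists_pdLE (hX : Resolving X) (hP : ∀ M, X M → InP M) (hc : ContravariantlyFinite X) :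
    ∃ n, ∀ M, X M → pdLE M n := by
  obtain ⟨XJ, g, hg⟩ := hc (ModuleCat.of A (A ⧸ Ring.jacobson A))
    (inferInstanceAs (Module.Finite A (A ⧸ Ring.jacobson A)))
  obtain ⟨n, hn⟩ := (hP _ hg.1).2
  let 𝒞 (C : ModuleCat.{u} A) : Prop := X C ∧ pdLE C n
  have hclosed : ClosedUnderExtensions (HasSpecialPrecover 𝒞 (InPerpOf X)) :=
    closedUnderExtensions_hasSpecialPrecover
      (fun _ _ _ _ _ h h₁ h₃ ↦ ⟨hX.closedUnderExtensions h h₁.1 h₃.1, h.pdLE_mid h₁.2 h₃.2⟩)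
      (closedUnderExtensions_inPerpOf X) fun C Y hC hY ↦ (hY C hC.1).above 1
  have hzero (M : ModuleCat.{u} A) (_ : Subsingleton M) :
      HasSpecialPrecover 𝒞 (InPerpOf X) M :=
    ⟨M, M, _, _, shortExact_linearEquiv_zero (.refl A M),
      ⟨hX.of_subsingleton, pdLE_of_projective .of_free⟩, fun _ _ ↦ extVanish_of_subsingleton⟩
  have hsimple (S : ModuleCat.{u} A) (_ : IsSimpleModule A S) :
      HasSpecialPrecover 𝒞 (InPerpOf X) S := by
    obtain ⟨Y, N, a, b, hab, hb, hY⟩ := hX.exists_shortExact_isMinimalRightApprox hP hc S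
    have hN : pdLE N n := (hb.isSummand hg (isSummand_quotient_jacobson S)).pdLE hn
    exact ⟨Y, N, a, b, hab, ⟨hb.1.1, hN⟩, hY⟩
  refine ⟨n, fun M hM ↦ ?_⟩
  have := (hP M hM).1
  obtain ⟨Y, C, a, b, hab, hC, hY⟩ := hclosed.mem_of_finite (M := M) hzero hsimple
  exact (hab.isSummand_right (hY M hM 1 one_pos)).pdLE hC.2

end Resolving

end SpecialApproximations

section Coresolutions

variable {A : Type u} [Ring A] {ω ω' : ModuleCat.{u} A → Prop} {L M N T Y : ModuleCat.{u} A}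

/-- `M` has a finite coresolution `0 → M → W⁰ → ⋯ → Wⁿ → 0` with all `Wⁱ ∈ ω`, encoded as a
succession of short exact sequences `0 → M → W → C → 0`. -/
inductive HasFiniteCoresolution (ω : ModuleCat.{u} A → Prop) : ModuleCat.{u} A → Prop
  | of_mem {M : ModuleCat.{u} A} (hM : ω M) : HasFiniteCoresolution ω M
  | of_shortExact {M W C : ModuleCat.{u} A} {f : M →ₗ[A] W} {g : W →ₗ[A] C}
      (h : ShortExact f g) (hW : ω W) (hC : HasFiniteCoresolution ω C) : HasFiniteCoresolution ω M

namespace HasFiniteCoresolution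

theorem mono (hM : HasFiniteCoresolution ω M) (hω : ∀ W, ω W → ω' W) :
    HasFiniteCoresolution ω' M := by
  induction hM with
  | of_mem hM => exact .of_mem (hω _ hM)
  | of_shortExact h hW _ ih => exact .of_shortExact h (hω _ hW) ih

theorem mem_of_closedUnderKernels (hM : HasFiniteCoresolution ω M) (hω : ClosedUnderKernels ω) :
    ω M := by
  induction hM with
  | of_mem hM => exact hM
  | of_shortExact h hW _ ih => exact hω h hW ih

theorem extVanish (hM : HasFiniteCoresolution ω M) (hω : ∀ W, ω W → ExtVanish W Y) :
    ExtVanish M Y :=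
  (hM.mono hω).mem_of_closedUnderKernels fun _ _ _ _ _ h h₂ h₃ ↦
    h.extVanishAbove_contra₁ h₂ (h₃.above 1)

theorem exists_inAddOf (hM : HasFiniteCoresolution ω M)
    (hprod : ∀ W W', ω W → ω W' → ω (ModuleCat.of A (W × W'))) :
    ∃ T, ω T ∧ HasFiniteCoresolution (InAddOf fun Y ↦ Y = T) M := by
  induction hM with
  | @of_mem M hM => exact ⟨M, hM, .of_mem (inAddOf_self M)⟩
  | @of_shortExact M W C _ _ h hW _ ih =>
    obtain ⟨T, hT, hC⟩ := ih
    exact ⟨_, hprod W T hW hT, .of_shortExact h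
      ((inAddOf_self W).mono_isSummand (isSummand_prod_left W T))
      (hC.mono fun _ hV ↦ hV.mono_isSummand (isSummand_prod_right W T))⟩

theorem exists_extend (hM : HasFiniteCoresolution ω M) (hω : ∀ W, ω W → ExtVanish W Y)
    (φ : M →ₗ[A] Y) :
    ∃ (W : ModuleCat.{u} A) (f : M →ₗ[A] W) (ψ : W →ₗ[A] Y), ω W ∧ ψ ∘ₗ f = φ := by
  cases hM with
  | of_mem hM => exact ⟨M, LinearMap.id, φ, hM, LinearMap.comp_id φ⟩
  | of_shortExact h hW hC =>
    obtain ⟨ψ, hψ⟩ := h.exists_extend (hC.extVanish hω 1 one_pos) φ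
    exact ⟨_, _, ψ, hW, hψ⟩

theorem surjective_of_isRightApprox (hA : HasFiniteCoresolution ω (ModuleCat.of A A))
    (hω : ∀ W, ω W → ExtVanish W Y) {φ : N →ₗ[A] Y} (hφ : IsRightApprox ω φ) :
    Function.Surjective φ := by
  intro y
  obtain ⟨W, f, ψ, hW, hψ⟩ := hA.exists_extend hω (LinearMap.toSpanSingleton A Y y)
  obtain ⟨h, rfl⟩ := hφ.2 W hW ψ
  exact ⟨h (f 1), by simpa using LinearMap.congr_fun hψ 1⟩

end HasFiniteCoresolution

theorem HasAddCoresolution.hasFiniteCoresolution (h : HasAddCoresolution T L) :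
    HasFiniteCoresolution (InAddOf fun Y ↦ Y = T) L := by
  obtain ⟨C, d, f, hf, hfd, hd, hC, m, hm⟩ := h
  induction m generalizing C L with
  | zero =>
    have := hm 0 le_rfl
    have : Subsingleton L := hf.subsingleton
    exact .of_mem ((hC 0).of_isSummand .of_subsingleton)
  | succ m ih =>
    refine .of_shortExact (C := ModuleCat.of A (LinearMap.range (d 0))) (f := f)
      (g := (d 0).rangeRestrict) ⟨hf, fun x ↦ ?_, (d 0).surjective_rangeRestrict⟩ (hC 0)
      (ih (fun i ↦ C (i + 1)) (fun i ↦ d (i + 1)) (LinearMap.range (d 0)).subtype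
        Subtype.val_injective (fun x ↦ ?_) (fun i ↦ hd (i + 1)) (fun i ↦ hC (i + 1))
        fun i hi ↦ hm (i + 1) (by lia))
    · rw [← hfd x, Subtype.ext_iff]
      rfl
    · rw [hd 0 x]
      simp

theorem hasAddCoresolution_of_subsingleton [Subsingleton L] : HasAddCoresolution T L :=
  have hexact (x : L) : (0 : L →ₗ[A] L) x = 0 ↔ x ∈ Set.range (0 : L →ₗ[A] L) :=
    iff_of_true (Subsingleton.elim _ _) ⟨x, Subsingleton.elim _ _⟩
  ⟨fun _ ↦ L, fun _ ↦ 0, 0, Function.injective_of_subsingleton _, hexact, fun _ ↦ hexact,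
    fun _ ↦ (inAddOf_self T).of_isSummand .of_subsingleton, 0, fun _ _ ↦ ‹_›⟩

theorem ShortExact.hasAddCoresolution {W C : ModuleCat.{u} A} {f : L →ₗ[A] W} {g : W →ₗ[A] C}
    (h : ShortExact f g) (hW : InAddOf (fun Y ↦ Y = T) W) (hC : HasAddCoresolution T C) :
    HasAddCoresolution T L := by
  obtain ⟨D, d, e, he, hed, hd, hD, m, hm⟩ := hC
  refine ⟨fun | 0 => W | i + 1 => D i, fun | 0 => e ∘ₗ g | i + 1 => d i, f, h.1, fun x ↦ ?_,
    fun | 0 => fun x ↦ ?_ | i + 1 => hd i, fun | 0 => hW | i + 1 => hD i, m + 1,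
    fun | 0, hi => by lia | i + 1, hi => hm i (by lia)⟩
  · rw [← h.2.1 x]
    exact map_eq_zero_iff e he
  · exact (hed x).trans (by rw [LinearMap.coe_comp, h.2.2.range_comp])

theorem HasFiniteCoresolution.hasAddCoresolution
    (h : HasFiniteCoresolution (InAddOf fun Y ↦ Y = T) L) : HasAddCoresolution T L := by
  induction h with
  | of_mem h =>
    exact (shortExact_linearEquiv_zero (N := ModuleCat.of A PUnit.{u + 1})
      (.refl A _)).hasAddCoresolution h hasAddCoresolution_of_subsingleton
  | of_shortExact h hW _ ih => exact h.hasAddCoresolution hW ih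

end Coresolutions

section AddApproximations

variable {A : Type u} [Ring A] {M N T Y : ModuleCat.{u} A}

theorem exists_pi_approx (R : Type*) [CommRing R] [IsNoetherianRing R] [Algebra R A]
    [Module.Finite R A] (T Y : ModuleCat.{u} A) [Module.Finite A T] [Module.Finite A Y] :
    ∃ (k : ℕ) (φ : (Fin k → T) →ₗ[A] Y), ∀ g : T →ₗ[A] Y,
      ∃ h : T →ₗ[A] (Fin k → T), φ ∘ₗ h = g := by
  let : Module R T := Module.restrictScalars R A T
  let : Module R Y := Module.restrictScalars R A Y
  have : IsScalarTower R A T := IsScalarTower.restrictScalars R A T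
  have : IsScalarTower R A Y := IsScalarTower.restrictScalars R A Y
  have : Module.Finite R T := Module.Finite.trans A T
  have : Module.Finite R Y := Module.Finite.trans A Y
  have : IsNoetherian R (T →ₗ[A] Y) :=
    isNoetherian_of_injective (LinearMap.restrictScalarsₗ R A T Y R)
      (LinearMap.restrictScalars_injective R)
  obtain ⟨k, s, hs⟩ := Module.Finite.exists_fin (R := R) (M := T →ₗ[A] Y)
  refine ⟨k, LinearMap.lsum A (fun _ ↦ T) ℕ s, fun g ↦ ?_⟩
  obtain ⟨c, rfl⟩ := (Submodule.mem_span_range_iff_exists_fun R).1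
    (hs ▸ Submodule.mem_top : g ∈ Submodule.span R (Set.range s))
  refine ⟨LinearMap.pi fun i ↦ c i • LinearMap.id, LinearMap.ext fun x ↦ ?_⟩
  simp [LinearMap.lsum_apply, LinearMap.sum_apply, LinearMap.map_smul_of_tower]

theorem InAddOf.exists_lift {φ : N →ₗ[A] Y} (hM : InAddOf (fun X ↦ X = T) M)
    (hφ : ∀ g : T →ₗ[A] Y, ∃ h : T →ₗ[A] N, φ ∘ₗ h = g) (g : M →ₗ[A] Y) :
    ∃ h : M →ₗ[A] N, φ ∘ₗ h = g := by
  obtain ⟨k, s, r, hrs⟩ := inAddOf_eq_iff.1 hM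
  choose h hh using fun j : Fin k ↦ hφ (g ∘ₗ r ∘ₗ LinearMap.single A (fun _ ↦ T) j)
  have hsum : φ ∘ₗ LinearMap.lsum A (fun _ ↦ T) ℕ h = g ∘ₗ r := by
    refine LinearMap.pi_ext' fun j ↦ LinearMap.ext fun x ↦ ?_
    exact (congrArg φ (LinearMap.lsum_piSingle ..)).trans (LinearMap.congr_fun (hh j) x)
  refine ⟨LinearMap.lsum A (fun _ ↦ T) ℕ h ∘ₗ s, ?_⟩
  rw [← LinearMap.comp_assoc, hsum, LinearMap.comp_assoc, hrs, LinearMap.comp_id]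

theorem exists_isRightApprox_inAddOf (R : Type*) [CommRing R] [IsNoetherianRing R] [Algebra R A]
    [Module.Finite R A] (T Y : ModuleCat.{u} A) [Module.Finite A T] [Module.Finite A Y] :
    ∃ (U : ModuleCat.{u} A) (φ : U →ₗ[A] Y), IsRightApprox (InAddOf fun X ↦ X = T) φ := by
  obtain ⟨k, φ, hφ⟩ := exists_pi_approx R T Y
  exact ⟨_, φ, inAddOf_pi T k, fun M hM ↦ hM.exists_lift hφ⟩

end AddApproximations

section Tilting

variable {A : Type u} [Ring A] {M T W Y : ModuleCat.{u} A}

/-- The finitely generated modules in `T^⊥`. -/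
def InFinitePerp (T M : ModuleCat.{u} A) : Prop :=
  Module.Finite A M ∧ ExtVanish T M

/-- The modules `M ∈ 𝒫` with `Ext^i(M, T) = 0` for all `i > 0`. For a tilting module `T` this is
the resolving subcategory to which `T` corresponds. -/
def InLeftPerp (T M : ModuleCat.{u} A) : Prop :=
  InP M ∧ ExtVanish M T

theorem closedUnderExtensions_inFinitePerp (T : ModuleCat.{u} A) :
    ClosedUnderExtensions (InFinitePerp T) :=
  fun _ _ _ _ _ h ⟨_, h₁⟩ ⟨_, h₃⟩ ↦ ⟨h.finite_mid, h.extVanishAbove_cov₂ h₁ h₃⟩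

theorem resolving_inLeftPerp [IsNoetherianRing A] (T : ModuleCat.{u} A) :
    Resolving (InLeftPerp T) :=
  ⟨fun _ hfin hproj ↦ ⟨⟨hfin, 0, pdLE_of_projective hproj⟩, extVanish_of_projective hproj⟩,
    fun _ _ _ _ _ h h₁ h₃ ↦
      ⟨closedUnderExtensions_inP h h₁.1 h₃.1, h.extVanishAbove_contra₂ h₁.2 h₃.2⟩,
    fun _ _ _ _ _ h h₂ h₃ ↦
      ⟨closedUnderKernels_inP h h₂.1 h₃.1, h.extVanishAbove_contra₁ h₂.2 (h₃.2.above 1)⟩⟩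

namespace IsTilting

theorem inLeftPerp_of_inAddOf (hT : IsTilting T) (hM : InAddOf (fun X ↦ X = T) M) :
    InLeftPerp T M :=
  ⟨hM.inP ⟨hT.1, hT.2.1⟩, hM.extVanish_left hT.2.2.1⟩

variable (R : Type*) [CommRing R] [IsNoetherianRing R] [Algebra R A] [Module.Finite R A]

include R

theorem hasSpecialPrecover_inAddOf (hT : IsTilting T) (hY : InFinitePerp T Y) :
    HasSpecialPrecover (InAddOf fun X ↦ X = T) (InFinitePerp T) Y := by
  have : IsNoetherianRing A := .of_finite R A
  obtain ⟨hTfin, hpd, hself, hA⟩ := hT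
  have := hY.1
  obtain ⟨U, φ, hφ⟩ := exists_isRightApprox_inAddOf R T Y
  have hTU : ExtVanish T U := hφ.1.extVanish_right hself
  have hker := shortExact_ker (hA.hasFiniteCoresolution.surjective_of_isRightApprox
    (fun W hW ↦ hW.extVanish_left hY.2) hφ)
  have := (hφ.1.inP ⟨hTfin, hpd⟩).1
  refine ⟨_, U, _, φ, hker, hφ.1, hker.finite_left, fun i hi ↦ ?_⟩
  obtain rfl | hi := (Nat.succ_le_of_lt hi).eq_or_lt
  · exact hker.subsingleton_ext_one_of_lift (hφ.2 T (inAddOf_self T)) (hTU 1 one_pos)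
  · exact hker.extVanishAbove_cov₁ hY.2 (hTU.above 1) i hi

theorem extVanish (hT : IsTilting T) (hW : InLeftPerp T W) (hY : InFinitePerp T Y) :
    ExtVanish W Y := by
  obtain ⟨⟨-, n, hn⟩, hWT⟩ := hW
  have hvanish (m : ℕ) (hm : ∀ Y, InFinitePerp T Y → ExtVanishAbove m W Y) :
      ∀ Y, InFinitePerp T Y → ExtVanish W Y := by
    induction m with
    | zero => exact hm
    | succ m ih =>
      refine ih fun Y hY ↦ ?_
      obtain ⟨K, U, a, b, h, hU, hK⟩ := hT.hasSpecialPrecover_inAddOf R hY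
      exact h.extVanishAbove_cov₃ ((hU.extVanish_right hWT).above m) (hm K hK)
  exact hvanish n (fun Y _ ↦ pdLE_iff.1 hn Y) Y hY

theorem inAddOf_iff (hT : IsTilting T) :
    InAddOf (fun X ↦ X = T) M ↔ InLeftPerp T M ∧ InFinitePerp T M := by
  constructor
  · intro hM
    have hM' := hT.inLeftPerp_of_inAddOf hM
    exact ⟨hM', hM'.1.1, hM.extVanish_right hT.2.2.1⟩
  · rintro ⟨hM, hM'⟩
    obtain ⟨K, U, a, b, h, hU, hK⟩ := hT.hasSpecialPrecover_inAddOf R hM'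
    exact hU.of_isSummand (h.isSummand_right (hT.extVanish R hM hK 1 one_pos))

end IsTilting

end Tilting

section Correspondence

variable {A : Type u} [Ring A] {M T : ModuleCat.{u} A} {X X' : ModuleCat.{u} A → Prop}
  (R : Type*) [CommRing R] [IsArtinianRing R] [Algebra R A] [Module.Finite R A]

include R

namespace IsTilting

theorem hasSpecialPrecover_inLeftPerp [Module.Finite A M] (hT : IsTilting T) {m : ℕ}
    (hM : ExtVanishAbove m T M) : HasSpecialPrecover (InLeftPerp T) (InFinitePerp T) M := by
  have : IsNoetherianRing A := .of_finite R A
  have hperp {Y} (hY : InFinitePerp T Y) : HasSpecialPrecover (InLeftPerp T) (InFinitePerp T) Y :=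
    (hT.hasSpecialPrecover_inAddOf R hY).mono fun _ ↦ hT.inLeftPerp_of_inAddOf
  induction m generalizing M with
  | zero => exact hperp ⟨‹_›, hM⟩
  | succ m ih =>
    obtain ⟨I, C, i, p, hip, hIfin, hIinj, hCfin⟩ := exists_shortExact_finite_injective R M
    have hI : ExtVanish T I := extVanish_of_injective hIinj
    have hC : HasSpecialPrecover (InLeftPerp T) (InFinitePerp T) C :=
      ih (hip.extVanishAbove_cov₃ (hI.above m) hM)
    obtain ⟨E, D, a, b, h, hE, hD⟩ :=
      hip.hasSpecialPreenvelope_left (closedUnderExtensions_inFinitePerp T) ⟨hIfin, hI⟩ hC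
    exact h.hasSpecialPrecover_left (resolving_inLeftPerp T).closedUnderKernels (hperp hE) hD

theorem contravariantlyFinite_inLeftPerp (hT : IsTilting T) :
    ContravariantlyFinite (InLeftPerp T) := by
  intro M hM
  obtain ⟨n, hn⟩ := hT.2.1
  exact (hT.hasSpecialPrecover_inLeftPerp R (pdLE_iff.1 hn M)).exists_isRightApprox
    fun _ _ hC hY ↦ hT.extVanish R hC hY 1 one_pos

theorem inLeftPerp_and_inPerpOf_iff (hT : IsTilting T) :
    (InLeftPerp T M ∧ InPerpOf (InLeftPerp T) M) ↔ InAddOf (fun Y ↦ Y = T) M := by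
  refine (and_congr_right fun hM ↦ ?_).trans (hT.inAddOf_iff R).symm
  exact ⟨fun h ↦ ⟨hM.1.1, h T (hT.inLeftPerp_of_inAddOf (inAddOf_self T))⟩,
    fun h _ hN ↦ hT.extVanish R hN h⟩

end IsTilting

namespace Resolving

theorem hasFiniteCoresolution (hX : Resolving X) (hP : ∀ M, X M → InP M)
    (hc : ContravariantlyFinite X) (hM : X M) :
    HasFiniteCoresolution (fun W ↦ X W ∧ InPerpOf X W) M := by
  have : IsArtinianRing A := .of_finite R A
  obtain ⟨n, hn⟩ := hX.exists_pdLE hP hc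
  have hMn (N) (hN : X N) : ExtVanishAbove n N M := pdLE_iff.1 (hn N hN) M
  clear hn
  induction n generalizing M with
  | zero => exact .of_mem ⟨hM, hMn⟩
  | succ n ih =>
    have := (hP M hM).1
    obtain ⟨I, C, i, p, hip, -, hIinj, hCfin⟩ := exists_shortExact_finite_injective R M
    obtain ⟨E, D, a, b, h, hE, hD⟩ :=
      hip.hasSpecialPreenvelope_left (closedUnderExtensions_inPerpOf X)
        (fun _ _ ↦ extVanish_of_injective hIinj) (hX.hasSpecialPrecover hP hc C)
    exact .of_shortExact h ⟨hX.closedUnderExtensions h hM hD, hE⟩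
      (ih hD fun N hN ↦ h.extVanishAbove_cov₃ ((hE N hN).above n) (hMn N hN))

theorem exists_isTilting (hX : Resolving X) (hP : ∀ M, X M → InP M)
    (hc : ContravariantlyFinite X) :
    ∃ T : ModuleCat.{u} A, IsTilting T ∧
      ∀ M, (X M ∧ InPerpOf X M) ↔ InAddOf (fun Y ↦ Y = T) M := by
  have hXA : X (ModuleCat.of A A) :=
    hX.1 _ (inferInstanceAs (Module.Finite A A)) (inferInstanceAs (Module.Projective A A))
  obtain ⟨T, ⟨hTX, hTperp⟩, hA⟩ :=
    (hX.hasFiniteCoresolution R hP hc hXA).exists_inAddOf fun W W' hW hW' ↦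
      ⟨hX.prod hW.1 hW'.1,
        closedUnderExtensions_inPerpOf X (shortExact_prod W W') hW.2 hW'.2⟩
  have hT : IsTilting T := ⟨(hP T hTX).1, (hP T hTX).2, hTperp T hTX, hA.hasAddCoresolution⟩
  refine ⟨T, hT, fun M ↦ ⟨fun ⟨hM, hMperp⟩ ↦ ?_, fun hM ↦ ⟨?_, fun N hN ↦ ?_⟩⟩⟩
  · exact (hT.inAddOf_iff R).2 ⟨⟨hP M hM, hTperp M hM⟩, (hP M hM).1, hMperp T hTX⟩
  · exact hM.mem_of_closed (fun _ _ ↦ hX.of_subsingleton) hX.closedUnderExtensions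
      (fun _ _ ↦ hX.of_isSummand hP) hTX
  · exact hM.extVanish_right (hTperp N hN)

theorem mem_of_inPerpOf_mem (hX : Resolving X) (hP : ∀ M, X M → InP M)
    (hc : ContravariantlyFinite X) (hX' : ClosedUnderKernels X')
    (h : ∀ M, X M ∧ InPerpOf X M → X' M) (hM : X M) : X' M :=
  ((hX.hasFiniteCoresolution R hP hc hM).mono h).mem_of_closedUnderKernels hX'

end Resolving

end Correspondence

/-- `𝒳 ↦ 𝒳 ∩ 𝒳^⊥` is a bijection between contravariantly finite resolving
subcategories of `𝒫` and equivalence classes of tilting modules (`𝒳 ∩ 𝒳^⊥ = add T`). -/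
theorem stmt_13 (Λ : Type u) [Ring Λ] (R : Type u) [CommRing R] [IsArtinianRing R]
    [Algebra R Λ] [Module.Finite R Λ] :
    (∀ X : ModuleCat.{u} Λᵐᵒᵖ → Prop,
        (∀ M, X M → InP M) → ContravariantlyFinite X → Resolving X →
        ∃ T : ModuleCat.{u} Λᵐᵒᵖ, IsTilting T ∧
          ∀ M, (X M ∧ InPerpOf X M) ↔ InAddOf (fun Y => Y = T) M) ∧
    (∀ X X' : ModuleCat.{u} Λᵐᵒᵖ → Prop,
        (∀ M, X M → InP M) → ContravariantlyFinite X → Resolving X →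
        (∀ M, X' M → InP M) → ContravariantlyFinite X' → Resolving X' →
        (∀ M, (X M ∧ InPerpOf X M) ↔ (X' M ∧ InPerpOf X' M)) →
        ∀ M, X M ↔ X' M) ∧
    (∀ T : ModuleCat.{u} Λᵐᵒᵖ, IsTilting T →
        ∃ X : ModuleCat.{u} Λᵐᵒᵖ → Prop,
          (∀ M, X M → InP M) ∧ ContravariantlyFinite X ∧ Resolving X ∧
          ∀ M, (X M ∧ InPerpOf X M) ↔ InAddOf (fun Y => Y = T) M) := by
  have : Module.Finite R Λᵐᵒᵖ := .equiv (MulOpposite.opLinearEquiv R : Λ ≃ₗ[R] Λᵐᵒᵖ)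
  have : IsNoetherianRing Λᵐᵒᵖ := .of_finite R Λᵐᵒᵖ
  refine ⟨fun X hP hc hX ↦ hX.exists_isTilting R hP hc, ?_, ?_⟩
  · intro X X' hP hc hX hP' hc' hX' h M
    exact ⟨hX.mem_of_inPerpOf_mem R hP hc hX'.closedUnderKernels fun W hW ↦ ((h W).1 hW).1,
      hX'.mem_of_inPerpOf_mem R hP' hc' hX.closedUnderKernels fun W hW ↦ ((h W).2 hW).1⟩
  · intro T hT
    exact ⟨InLeftPerp T, fun _ hM ↦ hM.1, hT.contravariantlyFinite_inLeftPerp R,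
      resolving_inLeftPerp T, fun _ ↦ hT.inLeftPerp_and_inPerpOf_iff R⟩
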